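/- arXiv:2005.06207 — 6 statements merged into one kernel-verified Lean document; each statement's English description precedes it below -/
import Mathlib

section
/- Let f₁ : ℝⁿ → (−∞,+∞] be proper and f₂ : ℝⁿ → ℝ. Define ρ : ℝⁿ → (−∞,+∞] by ρ(x) = f₁(x)/f₂(x) if x ∈ dom(f₁) and f₂(x) ≠ 0, and ρ(x) = +∞ otherwise. Let x ∈ dom(ρ), set a₁ := f₁(x) and a₂ := f₂(x), and assume a₂ > 0. If f₁ is continuous at x relative to dom(f₁) and f₂ satisfies the calmness condition at x, then ∂̂ρ(x) = { w/a₂² : w ∈ ∂̂(a₂·f₁ − a₁·f₂)(x) }. If, in addition, f₂ is differentiable at x, then ∂̂ρ(x) = { (a₂·v − a₁·∇f₂(x))/a₂² : v ∈ ∂̂f₁(x) }. -/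
open Filter Topology
open scoped RealInnerProductSpace

noncomputable section

/-- The Fréchet subdifferential of an extended-real-valued function `φ` at `x`:
the set of `y` with `liminf_{z→x, z≠x} (φ z − φ x − ⟨y, z−x⟩)/‖z−x‖ ≥ 0`,
empty when `φ x = +∞`. -/
def fsub {n : ℕ} (φ : EuclideanSpace ℝ (Fin n) → EReal) (x : EuclideanSpace ℝ (Fin n)) :
    Set (EuclideanSpace ℝ (Fin n)) :=
  {y | φ x ≠ ⊤ ∧
    0 ≤ liminf (fun z => (φ z - φ x - ((⟪y, z - x⟫ : ℝ) : EReal)) / ((‖z - x‖ : ℝ) : EReal))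
      (𝓝[≠] x)}

/-!
Membership of `ℓ` in the subdifferential of `φ` at `x` says that the negative part of
`φ z - φ x - ℓ (z - x)` is `o(z - x)` along the domain of `φ`. Hence if, up to a linear map `ℓ₀` and
an error `o(z - x)`, the increments of `φ` are `c > 0` times those of `ψ`, then
`∂φ(x) = c • ∂ψ(x) + ℓ₀`. With `a₁ = f₁ x` and `a₂ = f₂ x`, the identity
`f₁ / f₂ - a₁ / a₂ - (a₂ f₁ - a₁ f₂) / a₂² = (a₂ f₁ - a₁ f₂) (a₂ - f₂) / (a₂² f₂)`
has right-hand side `o(1) * O(z - x)`, which compares the quotient with `a₂ f₁ - a₁ f₂`; the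
first-order expansion of `f₂` compares the latter with `f₁`.
-/

section NegPart

open Asymptotics

variable {α F : Type*} [SeminormedAddCommGroup F] {l : Filter α} {g h : α → ℝ} {k : α → F} {c : ℝ}

theorem isLittleO_negPart_iff :
    (fun z => (g z)⁻) =o[l] k ↔ ∀ ε > 0, ∀ᶠ z in l, -(ε * ‖k z‖) ≤ g z := by
  rw [isLittleO_iff]
  refine forall₂_congr fun ε hε => eventually_congr (Eventually.of_forall fun z => ?_)
  have hbound : 0 ≤ ε * ‖k z‖ := by positivity
  rw [Real.norm_of_nonneg (negPart_nonneg _), negPart_def, sup_le_iff, neg_le,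
    and_iff_left hbound]

theorem isLittleO_negPart_of_sub_const_mul (hc : 0 ≤ c) (hgh : (fun z => g z - c * h z) =o[l] k)
    (hh : (fun z => (h z)⁻) =o[l] k) : (fun z => (g z)⁻) =o[l] k := by
  refine (IsBigO.of_norm_le fun z => ?_).trans_isLittleO ((hh.const_mul_left c).add hgh.abs_left)
  have hneg : -(c * h z) ≤ c * (h z)⁻ := by
    simpa only [mul_neg] using mul_le_mul_of_nonneg_left (neg_le_negPart (h z)) hc
  rw [Real.norm_of_nonneg (negPart_nonneg _), negPart_def, sup_le_iff]
  constructor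
  · linarith [neg_abs_le (g z - c * h z)]
  · have := negPart_nonneg (h z)
    positivity

theorem isLittleO_negPart_iff_of_sub_const_mul (hc : 0 < c)
    (hgh : (fun z => g z - c * h z) =o[l] k) :
    (fun z => (g z)⁻) =o[l] k ↔ (fun z => (h z)⁻) =o[l] k := by
  refine ⟨isLittleO_negPart_of_sub_const_mul (inv_nonneg.2 hc.le) ?_,
    isLittleO_negPart_of_sub_const_mul hc.le hgh⟩
  refine (hgh.const_mul_left (-c⁻¹)).congr_left fun z => ?_
  field_simp
  ring

end NegPart

theorem isLittleO_div_sub_div_sub_linearization {α 𝕜 F : Type*} [NormedField 𝕜]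
    [SeminormedAddCommGroup F] {l : Filter α} {p q : α → 𝕜} {k : α → F} {a b : 𝕜} (hb : b ≠ 0)
    (hp : Tendsto p l (𝓝 a)) (hq : Tendsto q l (𝓝 b)) (hqk : (fun z => q z - b) =O[l] k) :
    (fun z => p z / q z - a / b - (b ^ 2)⁻¹ * (b * p z - a * q z)) =o[l] k := by
  have hfactor : Tendsto (fun z => -(b * p z - a * q z) / (b ^ 2 * q z)) l (𝓝 0) := by
    have hdiv := ((hp.const_mul b).sub (hq.const_mul a)).neg.div (hq.const_mul (b ^ 2))
      (mul_ne_zero (pow_ne_zero 2 hb) hb)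
    rwa [mul_comm a b, sub_self, neg_zero, zero_div] at hdiv
  have hprod := ((Asymptotics.isLittleO_one_iff ℝ).2 hfactor).mul_isBigO hqk.norm_right
  simp only [one_mul] at hprod
  refine hprod.of_norm_right.congr' ?_ EventuallyEq.rfl
  filter_upwards [hq.eventually_ne hb] with z hz
  field_simp
  ring

theorem continuousWithinAt_of_isBigO_sub {E F : Type*} [NormedAddCommGroup E]
    [NormedAddCommGroup F] {q : E → F} {D : Set E} {x : E}
    (hq : (fun z => q z - q x) =O[𝓝[D] x] (fun z => z - x)) : ContinuousWithinAt q D x := by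
  have hsub : Tendsto (fun z => z - x) (𝓝[D] x) (𝓝 0) :=
    tendsto_sub_nhds_zero_iff.2 nhdsWithin_le_nhds
  have hqsub : Tendsto (fun z => q z - q x) (𝓝[D] x) (𝓝 0) := hq.trans_tendsto hsub
  exact tendsto_sub_nhds_zero_iff.1 hqsub

theorem zero_le_liminf_iff_forall_neg_le {α : Type*} {l : Filter α} {u : α → EReal} :
    0 ≤ liminf u l ↔ ∀ ε : ℝ, 0 < ε → ∀ᶠ z in l, ((-ε : ℝ) : EReal) ≤ u z := by
  rw [le_liminf_iff]
  constructor
  · intro h ε hε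
    exact (h _ (by exact_mod_cast neg_lt_zero.2 hε)).mono fun _ => le_of_lt
  · intro h b hb
    obtain ⟨r, hbr, hr⟩ := EReal.lt_iff_exists_real_btwn.1 hb
    have neg_r_pos : 0 < -r := neg_pos.2 (by exact_mod_cast hr)
    filter_upwards [h (-r) neg_r_pos] with z hz
    rw [neg_neg] at hz
    exact hbr.trans_le hz

/-- Near the point `x` of `D`, the extended-real-valued function `φ` is the extension by `+∞` of the
restriction of the real-valued function `g` to `D`. The set `D` need only agree with the domain
of `φ` near `x`, so that functions with locally equal domains can share it. -/
structure IsTopExtensionNear {X : Type*} [TopologicalSpace X] (φ : X → EReal) (g : X → ℝ)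
    (D : Set X) (x : X) : Prop where
  mem : x ∈ D
  eventually_eq_coe : ∀ᶠ z in 𝓝[D] x, φ z = g z
  eventually_eq_top : ∀ᶠ z in 𝓝[Dᶜ] x, φ z = ⊤

namespace IsTopExtensionNear

section TopologicalSpace

variable {X : Type*} [TopologicalSpace X] {φ : X → EReal} {g : X → ℝ} {D : Set X} {x : X} {c : ℝ}

theorem apply_self (hφ : IsTopExtensionNear φ g D x) : φ x = g x :=
  hφ.eventually_eq_coe.self_of_nhdsWithin hφ.mem

theorem const_mul_sub (hφ : IsTopExtensionNear φ g D x) (hc : 0 < c) (q : X → ℝ) :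
    IsTopExtensionNear (fun z => (c : EReal) * φ z - (q z : EReal)) (fun z => c * g z - q z)
      D x where
  mem := hφ.mem
  eventually_eq_coe := hφ.eventually_eq_coe.mono fun z hz => by
    rw [hz]
    push_cast
    rfl
  eventually_eq_top := hφ.eventually_eq_top.mono fun z hz => by
    rw [hz, EReal.coe_mul_top_of_pos hc, EReal.top_sub_coe]

theorem toReal_of_ne_bot (hbot : ∀ z, φ z ≠ ⊥) (hx : φ x ≠ ⊤) :
    IsTopExtensionNear φ (fun z => (φ z).toReal) {z | φ z ≠ ⊤} x where
  mem := hx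
  eventually_eq_coe := eventually_mem_nhdsWithin.mono fun z hz =>
    (EReal.coe_toReal hz (hbot z)).symm
  eventually_eq_top := eventually_mem_nhdsWithin.mono fun _ hz => not_not.1 hz

theorem toReal_div {ρ : X → EReal} {q : X → ℝ}
    (hρ : ∀ z, ρ z = if φ z ≠ ⊤ ∧ q z ≠ 0 then (((φ z).toReal / q z : ℝ) : EReal) else ⊤)
    (hx : φ x ≠ ⊤) (hq : ∀ᶠ z in 𝓝[{z | φ z ≠ ⊤}] x, q z ≠ 0) :
    IsTopExtensionNear ρ (fun z => (φ z).toReal / q z) {z | φ z ≠ ⊤} x where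
  mem := hx
  eventually_eq_coe := by
    filter_upwards [self_mem_nhdsWithin, hq] with z hφz hqz
    rw [hρ, if_pos ⟨hφz, hqz⟩]
  eventually_eq_top := eventually_mem_nhdsWithin.mono fun z hz => by
    rw [hρ, if_neg fun h => hz h.1]

end TopologicalSpace

end IsTopExtensionNear

section NormedSpace

variable {E : Type*} [NormedAddCommGroup E] [NormedSpace ℝ E]

/-- The Fréchet subdifferential of `φ` at `x` in a real normed space, as a set of continuous linear
functionals. It agrees with `fsub` under the Riesz identification of a Euclidean space with its
dual. -/
def frechetSubdifferential (φ : E → EReal) (x : E) : Set (StrongDual ℝ E) :=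
  {ℓ | φ x ≠ ⊤ ∧
    0 ≤ liminf (fun z => (φ z - φ x - ((ℓ (z - x) : ℝ) : EReal)) / ((‖z - x‖ : ℝ) : EReal))
      (𝓝[≠] x)}

namespace IsTopExtensionNear

variable {φ ψ : E → EReal} {g h : E → ℝ} {D : Set E} {x : E} {c : ℝ}

theorem eventually_neg_le_differenceQuotient_iff (hφ : IsTopExtensionNear φ g D x)
    (ℓ : StrongDual ℝ E) (ε : ℝ) :
    (∀ᶠ z in 𝓝[≠] x, ((-ε : ℝ) : EReal) ≤
        (φ z - φ x - ((ℓ (z - x) : ℝ) : EReal)) / ((‖z - x‖ : ℝ) : EReal)) ↔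
      ∀ᶠ z in 𝓝[D] x, -(ε * ‖z - x‖) ≤ g z - g x - ℓ (z - x) := by
  have hcoe := eventually_nhdsWithin_iff.1 hφ.eventually_eq_coe
  have htop := eventually_nhdsWithin_iff.1 hφ.eventually_eq_top
  rw [eventually_nhdsWithin_iff, eventually_nhdsWithin_iff, hφ.apply_self]
  refine eventually_congr ?_
  filter_upwards [hcoe, htop] with z hcoe htop
  rcases eq_or_ne z x with rfl | hzx
  · simp
  have hpos : 0 < ‖z - x‖ := norm_sub_pos_iff.2 hzx
  by_cases hzD : z ∈ D
  · rw [hcoe hzD, ← EReal.coe_sub, ← EReal.coe_sub, ← EReal.coe_div, EReal.coe_le_coe_iff,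
      le_div_iff₀ hpos, neg_mul]
    exact ⟨fun H _ => H hzx, fun H _ => H hzD⟩
  · rw [htop hzD, EReal.top_sub_coe, EReal.top_sub_coe,
      EReal.top_div_of_pos_ne_top (EReal.coe_pos.2 hpos) (EReal.coe_ne_top _)]
    exact ⟨fun _ H => absurd H hzD, fun _ _ => le_top⟩

theorem mem_frechetSubdifferential_iff (hφ : IsTopExtensionNear φ g D x) (ℓ : StrongDual ℝ E) :
    ℓ ∈ frechetSubdifferential φ x ↔
      (fun z => (g z - g x - ℓ (z - x))⁻) =o[𝓝[D] x] (fun z => z - x) := by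
  have hx : φ x ≠ ⊤ := hφ.apply_self ▸ EReal.coe_ne_top (g x)
  rw [frechetSubdifferential, Set.mem_ofPred_eq, and_iff_right hx, zero_le_liminf_iff_forall_neg_le,
    isLittleO_negPart_iff]
  exact forall₂_congr fun ε _ => hφ.eventually_neg_le_differenceQuotient_iff ℓ ε

theorem frechetSubdifferential_eq_image (hφ : IsTopExtensionNear φ g D x)
    (hψ : IsTopExtensionNear ψ h D x) (hc : 0 < c) (ℓ₀ : StrongDual ℝ E)
    (hgh : (fun z => g z - g x - c * (h z - h x) - ℓ₀ (z - x)) =o[𝓝[D] x] (fun z => z - x)) :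
    frechetSubdifferential φ x = (fun ℓ => c • ℓ + ℓ₀) '' frechetSubdifferential ψ x := by
  have mem_iff (ℓ : StrongDual ℝ E) :
      c • ℓ + ℓ₀ ∈ frechetSubdifferential φ x ↔ ℓ ∈ frechetSubdifferential ψ x := by
    rw [hφ.mem_frechetSubdifferential_iff, hψ.mem_frechetSubdifferential_iff]
    refine isLittleO_negPart_iff_of_sub_const_mul hc (hgh.congr_left fun z => ?_)
    simp only [add_apply, smul_apply, smul_eq_mul]
    ring
  have surjective : Function.Surjective fun ℓ : StrongDual ℝ E => c • ℓ + ℓ₀ := fun ℓ =>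
    ⟨c⁻¹ • (ℓ - ℓ₀), by simp [smul_inv_smul₀ hc.ne']⟩
  rw [← surjective.image_preimage (frechetSubdifferential φ x)]
  exact congrArg _ (Set.ext mem_iff)

theorem frechetSubdifferential_const_mul_sub (hφ : IsTopExtensionNear φ g D x) (hc : 0 < c)
    {q : E → ℝ} {q' : StrongDual ℝ E} (hq : HasFDerivWithinAt q q' D x) :
    frechetSubdifferential (fun z => (c : EReal) * φ z - (q z : EReal)) x =
      (fun ℓ => c • ℓ - q') '' frechetSubdifferential φ x := by
  simp only [sub_eq_add_neg _ q']
  refine (hφ.const_mul_sub hc q).frechetSubdifferential_eq_image hφ hc (-q')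
    (hq.isLittleO.neg_left.congr_left fun z => ?_)
  simp only [neg_apply]
  ring

end IsTopExtensionNear

theorem quotient_rule_frechet_subdifferential_general
    (f₁ : E → EReal) (f₂ : E → ℝ) (hf₁_ne_bot : ∀ z, f₁ z ≠ ⊥) (ρ : E → EReal)
    (hρ : ∀ z, ρ z = if f₁ z ≠ ⊤ ∧ f₂ z ≠ 0 then (((f₁ z).toReal / f₂ z : ℝ) : EReal) else ⊤)
    (x : E) (hx : ρ x ≠ ⊤) (a₁ a₂ : ℝ) (ha₁ : a₁ = (f₁ x).toReal) (ha₂ : a₂ = f₂ x)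
    (ha₂_pos : 0 < a₂) (hf₁_cont : ContinuousWithinAt f₁ {z | f₁ z ≠ ⊤} x)
    (hf₂_calm : (fun z => f₂ z - f₂ x) =O[𝓝[{z | f₁ z ≠ ⊤}] x] (fun z => z - x)) :
    frechetSubdifferential ρ x =
      (fun w => (a₂ ^ 2)⁻¹ • w) ''
        frechetSubdifferential (fun z => (a₂ : EReal) * f₁ z - ((a₁ * f₂ z : ℝ) : EReal)) x ∧
    ∀ ℓ₂ : StrongDual ℝ E, HasFDerivWithinAt f₂ ℓ₂ {z | f₁ z ≠ ⊤} x →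
      frechetSubdifferential ρ x =
        (fun v => (a₂ ^ 2)⁻¹ • (a₂ • v - a₁ • ℓ₂)) '' frechetSubdifferential f₁ x := by
  have hf₁x : f₁ x ≠ ⊤ := fun h => hx (by simp [hρ, h])
  have hf₂ : Tendsto f₂ (𝓝[{z | f₁ z ≠ ⊤}] x) (𝓝 a₂) :=
    ha₂ ▸ continuousWithinAt_of_isBigO_sub hf₂_calm
  have hf₁ : Tendsto (fun z => (f₁ z).toReal) (𝓝[{z | f₁ z ≠ ⊤}] x) (𝓝 a₁) :=
    ha₁ ▸ (EReal.tendsto_toReal hf₁x (hf₁_ne_bot x)).comp hf₁_cont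
  have hext₁ := IsTopExtensionNear.toReal_of_ne_bot hf₁_ne_bot hf₁x
  have hextρ := IsTopExtensionNear.toReal_div hρ hf₁x (hf₂.eventually_ne ha₂_pos.ne')
  have hquot : frechetSubdifferential ρ x = (fun w => (a₂ ^ 2)⁻¹ • w) ''
      frechetSubdifferential (fun z => (a₂ : EReal) * f₁ z - ((a₁ * f₂ z : ℝ) : EReal)) x := by
    have hlin := isLittleO_div_sub_div_sub_linearization ha₂_pos.ne' hf₁ hf₂ (ha₂ ▸ hf₂_calm)
    simpa only [add_zero] using hextρ.frechetSubdifferential_eq_image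
      (hext₁.const_mul_sub ha₂_pos fun z => a₁ * f₂ z) (by positivity) 0
      (hlin.congr_left fun z => by simp only [← ha₁, ← ha₂, zero_apply]; ring)
  refine ⟨hquot, fun ℓ₂ hℓ₂ => ?_⟩
  rw [hquot, hext₁.frechetSubdifferential_const_mul_sub ha₂_pos (hℓ₂.const_mul a₁),
    Set.image_image]

end NormedSpace

theorem fsub_eq_image_toDual_symm {n : ℕ} (φ : EuclideanSpace ℝ (Fin n) → EReal)
    (x : EuclideanSpace ℝ (Fin n)) :
    fsub φ x = (InnerProductSpace.toDual ℝ _).symm '' frechetSubdifferential φ x := by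
  rw [LinearIsometryEquiv.image_eq_preimage_symm]
  rfl

/-- Proposition 2.2 (quotient rule for the Fréchet subdifferential). -/
theorem quotient_rule_frechet_subdifferential
    {n : ℕ} (hn : 1 ≤ n)
    (f₁ : EuclideanSpace ℝ (Fin n) → EReal) (f₂ : EuclideanSpace ℝ (Fin n) → ℝ)
    (hf₁_ne_bot : ∀ z, f₁ z ≠ ⊥) (hf₁_proper : ∃ z, f₁ z ≠ ⊤)
    (ρ : EuclideanSpace ℝ (Fin n) → EReal)
    (hρ : ∀ z, ρ z = if f₁ z ≠ ⊤ ∧ f₂ z ≠ 0 then (((f₁ z).toReal / f₂ z : ℝ) : EReal) else ⊤)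
    (x : EuclideanSpace ℝ (Fin n)) (hx : ρ x ≠ ⊤)
    (a₁ a₂ : ℝ) (ha₁ : a₁ = (f₁ x).toReal) (ha₂ : a₂ = f₂ x) (ha₂_pos : 0 < a₂)
    (hf₁_cont : ContinuousWithinAt f₁ {z | f₁ z ≠ ⊤} x)
    (hf₂_calm : ∃ κ > (0 : ℝ), ∀ᶠ u in 𝓝 x, |f₂ u - f₂ x| ≤ κ * ‖u - x‖) :
    fsub ρ x =
      (fun w => (a₂ ^ 2)⁻¹ • w) ''
        fsub (fun z => ((a₂ : ℝ) : EReal) * f₁ z - ((a₁ * f₂ z : ℝ) : EReal)) x ∧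
    (∀ v₂ : EuclideanSpace ℝ (Fin n), HasGradientAt f₂ v₂ x →
      fsub ρ x = (fun v => (a₂ ^ 2)⁻¹ • (a₂ • v - a₁ • v₂)) '' fsub f₁ x) := by
  obtain ⟨κ, -, hκ⟩ := hf₂_calm
  obtain ⟨hquot, hgrad⟩ := quotient_rule_frechet_subdifferential_general f₁ f₂ hf₁_ne_bot ρ hρ x hx
    a₁ a₂ ha₁ ha₂ ha₂_pos hf₁_cont (.of_bound κ (nhdsWithin_le_nhds hκ))
  simp only [fsub_eq_image_toDual_symm]
  refine ⟨?_, fun v₂ hv₂ => ?_⟩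
  · simp [hquot, Set.image_image]
  · simp [hgrad _ hv₂.hasFDerivAt.hasFDerivWithinAt, Set.image_image]
end
end

section
/- Suppose the standing assumptions on f, g, h, Ω, F hold. Let x⋆ ∈ dom(F), set c⋆ := F(x⋆), and suppose x⋆ is a local minimizer of x ↦ f(x) + h(x) − c⋆·g(x) on Ω. Then there exists δ > 0 such that for every x ∈ dom(F) with ‖x − x⋆‖₂ < δ and every y⋆ ∈ ∂g(x⋆): f(x⋆) ≤ f(x) + ⟨∇h(x⋆) − c⋆·y⋆, x − x⋆⟩ + (L/2)·‖x − x⋆‖₂². -/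
open Filter Topology
open scoped RealInnerProductSpace

noncomputable section

/-- The limiting (Mordukhovich) subdifferential. -/
def lsub {n : ℕ} (φ : EuclideanSpace ℝ (Fin n) → EReal) (x : EuclideanSpace ℝ (Fin n)) :
    Set (EuclideanSpace ℝ (Fin n)) :=
  {y | ∃ u : ℕ → EuclideanSpace ℝ (Fin n), ∃ v : ℕ → EuclideanSpace ℝ (Fin n),
      Tendsto u atTop (𝓝 x) ∧ Tendsto (fun k => φ (u k)) atTop (𝓝 (φ x)) ∧
      (∀ k, v k ∈ fsub φ (u k)) ∧ Tendsto v atTop (𝓝 y)}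

/-- The subdifferential of a convex real-valued function. -/
def csub {n : ℕ} (g : EuclideanSpace ℝ (Fin n) → ℝ) (x : EuclideanSpace ℝ (Fin n)) :
    Set (EuclideanSpace ℝ (Fin n)) :=
  {y | ∀ z, g x + ⟪y, z - x⟫ ≤ g z}

/-- The (possibly set-valued) proximity operator of a proper lsc extended-real-valued
function `ψ` at `u`. -/
def proxSet {n : ℕ} (ψ : EuclideanSpace ℝ (Fin n) → EReal) (u : EuclideanSpace ℝ (Fin n)) :
    Set (EuclideanSpace ℝ (Fin n)) :=
  {y | ∀ z, ψ y + ((‖y - u‖ ^ 2 / 2 : ℝ) : EReal) ≤ ψ z + ((‖z - u‖ ^ 2 / 2 : ℝ) : EReal)}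

/-- The fractional objective `F = (f+h)/g` on `Ω ∩ dom f`, `+∞` elsewhere. -/
def Ffrac {n : ℕ} (f : EuclideanSpace ℝ (Fin n) → EReal) (g h : EuclideanSpace ℝ (Fin n) → ℝ) :
    EuclideanSpace ℝ (Fin n) → EReal :=
  fun x => if g x ≠ 0 ∧ f x ≠ ⊤ then ((((f x).toReal + h x) / g x : ℝ) : EReal) else ⊤

/-!
The sign of `c = F a` is what matters: since `c ≥ 0`, a subgradient `y` of `g` at `a` gives
`-c * g x ≤ -c * g a - c * ⟪y, x - a⟫`, while the Lipschitz gradient of `h` gives the quadratic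
upper bound `h x ≤ h a + ⟪∇h a, x - a⟫ + L / 2 * ‖x - a‖ ^ 2`. Adding these bounds to the local
minimality inequality cancels `h a - c * g a`.
-/

theorem norm_image_sub_sub_fderiv_le_of_norm_fderiv_sub_le
    {E F : Type*} [NormedAddCommGroup E] [NormedSpace ℝ E] [NormedAddCommGroup F]
    [NormedSpace ℝ F] {φ : E → F} {φ' : E → E →L[ℝ] F} {s : Set E} {a x : E} {K : ℝ}
    (hs : Convex ℝ s) (ha : a ∈ s) (hx : x ∈ s)
    (hφ : ∀ z ∈ s, HasFDerivWithinAt φ (φ' z) s z)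
    (hφ' : ∀ z ∈ s, ‖φ' z - φ' a‖ ≤ K * ‖z - a‖) :
    ‖φ x - φ a - φ' a (x - a)‖ ≤ K / 2 * ‖x - a‖ ^ 2 := by
  let γ : ℝ → E := AffineMap.lineMap a x
  have hγ_mem : Set.MapsTo γ (Set.Icc 0 1) s := fun t ht => hs.lineMap_mem ha hx ht
  have hrem_deriv : ∀ t ∈ Set.Icc (0 : ℝ) 1,
      HasDerivWithinAt (fun t => φ (γ t) - φ a - t • φ' a (x - a)) ((φ' (γ t) - φ' a) (x - a))
        (Set.Icc 0 1) t := fun t ht => by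
    have hφγ : HasDerivWithinAt (fun t => φ (γ t)) (φ' (γ t) (x - a)) (Set.Icc 0 1) t :=
      (hφ _ (hγ_mem ht)).comp_hasDerivWithinAt t AffineMap.hasDerivWithinAt_lineMap hγ_mem
    have hlin : HasDerivAt (fun t : ℝ => t • φ' a (x - a)) (φ' a (x - a)) t := by
      simpa only [one_smul] using (hasDerivAt_id' t).smul_const (φ' a (x - a))
    exact (hφγ.sub_const (φ a)).fun_sub hlin.hasDerivWithinAt
  have hbound_deriv (t : ℝ) :
      HasDerivAt (fun t => K / 2 * ‖x - a‖ ^ 2 * t ^ 2) (K * ‖x - a‖ ^ 2 * t) t := by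
    refine ((hasDerivAt_pow 2 t).const_mul (K / 2 * ‖x - a‖ ^ 2)).congr_deriv ?_
    push_cast
    ring
  have hderiv_le : ∀ t ∈ Set.Ico (0 : ℝ) 1, ‖(φ' (γ t) - φ' a) (x - a)‖ ≤ K * ‖x - a‖ ^ 2 * t :=
    fun t ht => calc
      ‖(φ' (γ t) - φ' a) (x - a)‖ ≤ ‖φ' (γ t) - φ' a‖ * ‖x - a‖ := (φ' (γ t) - φ' a).le_opNorm _
      _ ≤ K * ‖γ t - a‖ * ‖x - a‖ := by gcongr; exact hφ' _ (hγ_mem (Set.Ico_subset_Icc_self ht))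
      _ = K * ‖x - a‖ ^ 2 * t := by
        rw [← dist_eq_norm (γ t), dist_lineMap_left, dist_comm, dist_eq_norm,
          Real.norm_of_nonneg ht.1]
        ring
  have hrem_le := image_norm_le_of_norm_deriv_right_le_deriv_boundary
    (fun t ht => (hrem_deriv t ht).continuousWithinAt)
    (fun t ht => (hrem_deriv t (Set.Ico_subset_Icc_self ht)).mono_of_mem_nhdsWithin
      (Icc_mem_nhdsGE_of_mem ht))
    (by simp [γ]) hbound_deriv hderiv_le (Set.right_mem_Icc.2 zero_le_one)
  simpa [γ] using hrem_le

theorem le_add_inner_add_sq_of_norm_gradient_sub_le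
    {E : Type*} [NormedAddCommGroup E] [InnerProductSpace ℝ E] [CompleteSpace E]
    {h : E → ℝ} {h' : E → E} {s : Set E} {a x : E} {L : ℝ}
    (hs : Convex ℝ s) (ha : a ∈ s) (hx : x ∈ s)
    (hh : ∀ z ∈ s, HasGradientWithinAt h (h' z) s z)
    (hh' : ∀ z ∈ s, ‖h' z - h' a‖ ≤ L * ‖z - a‖) :
    h x ≤ h a + ⟪h' a, x - a⟫ + L / 2 * ‖x - a‖ ^ 2 := by
  have hremainder : ‖h x - h a - ⟪h' a, x - a⟫‖ ≤ L / 2 * ‖x - a‖ ^ 2 :=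
    norm_image_sub_sub_fderiv_le_of_norm_fderiv_sub_le hs ha hx
      (fun z hz => (hh z hz).hasFDerivWithinAt)
      (fun z hz => by simpa only [← map_sub, LinearIsometryEquiv.norm_map] using hh' z hz)
  linarith [(Real.le_norm_self _).trans hremainder]

theorem ereal_le_add_coe_of_add_coe_le_add_coe {u v : EReal} {p q r : ℝ}
    (huv : u + p ≤ v + q) (hqp : q ≤ p + r) : u ≤ v + r := by
  have hsub : q - p ≤ r := by linarith
  calc
    u = u + p - p := EReal.add_sub_cancel_right.symm
    _ ≤ v + q - p := EReal.sub_le_sub huv le_rfl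
    _ = v + (q - p : ℝ) := by rw [sub_eq_add_neg, add_assoc, EReal.coe_sub, sub_eq_add_neg]
    _ ≤ v + r := by gcongr

theorem Ffrac_nonneg {n : ℕ} {f : EuclideanSpace ℝ (Fin n) → EReal}
    {g h : EuclideanSpace ℝ (Fin n) → ℝ} {x : EuclideanSpace ℝ (Fin n)}
    (hfh : 0 ≤ f x + (h x : EReal)) (hg : 0 ≤ g x) : 0 ≤ Ffrac f g h x := by
  unfold Ffrac
  split_ifs with hx
  · have hf_ne_bot : f x ≠ ⊥ := fun hbot => by simp [hbot] at hfh
    rw [← EReal.coe_toReal hx.2 hf_ne_bot] at hfh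
    exact_mod_cast div_nonneg (by exact_mod_cast hfh) hg
  · exact le_top

theorem key_inequality_at_parametric_local_min_general
    {E : Type*} [NormedAddCommGroup E] [InnerProductSpace ℝ E] [CompleteSpace E]
    {f : E → EReal} {g h : E → ℝ} {h' : E → E} {s : Set E} {a : E} {c L : ℝ} (hc : 0 ≤ c)
    (hh : ∀ z, HasGradientAt h (h' z) z) (hh' : ∀ z, ‖h' z - h' a‖ ≤ L * ‖z - a‖)
    (hmin : ∃ δ > (0 : ℝ), ∀ x ∈ s, ‖x - a‖ < δ →
      f a + ((h a - c * g a : ℝ) : EReal) ≤ f x + ((h x - c * g x : ℝ) : EReal)) :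
    ∃ δ > (0 : ℝ), ∀ x ∈ s, ‖x - a‖ < δ → ∀ y, (∀ z, g a + ⟪y, z - a⟫ ≤ g z) →
      f a ≤ f x + ((⟪h' a - c • y, x - a⟫ + L / 2 * ‖x - a‖ ^ 2 : ℝ) : EReal) := by
  obtain ⟨δ, hδ, hle⟩ := hmin
  refine ⟨δ, hδ, fun x hx hxδ y hy => ereal_le_add_coe_of_add_coe_le_add_coe (hle x hx hxδ) ?_⟩
  have hh_le : h x ≤ h a + ⟪h' a, x - a⟫ + L / 2 * ‖x - a‖ ^ 2 :=
    le_add_inner_add_sq_of_norm_gradient_sub_le convex_univ (Set.mem_univ a) (Set.mem_univ x)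
      (fun z _ => hasGradientWithinAt_univ.2 (hh z)) (fun z _ => hh' z)
  have hg_le : c * (g a + ⟪y, x - a⟫) ≤ c * g x := mul_le_mul_of_nonneg_left (hy x) hc
  rw [inner_sub_left, real_inner_smul_left]
  linarith

/-- Lemma 3.2: the key inequality at a local minimizer of the parametric problem. -/
theorem key_inequality_at_parametric_local_min
    {n : ℕ} (hn : 1 ≤ n)
    (f : EuclideanSpace ℝ (Fin n) → EReal) (g h : EuclideanSpace ℝ (Fin n) → ℝ)
    (h' : EuclideanSpace ℝ (Fin n) → EuclideanSpace ℝ (Fin n)) (L : ℝ)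
    (hf_ne_bot : ∀ z, f z ≠ ⊥) (hf_proper : ∃ z, f z ≠ ⊤)
    (hf_lsc : LowerSemicontinuous f)
    (hf_bdd : ∃ m : ℝ, ∀ z, (m : EReal) ≤ f z)
    (hf_cont : ContinuousOn f {z | f z ≠ ⊤})
    (hg_cvx : ConvexOn ℝ Set.univ g)
    (hL : 0 < L)
    (hh_grad : ∀ z, HasGradientAt h (h' z) z)
    (hh_lip : LipschitzWith (Real.toNNReal L) h')
    (hΩ : ∃ z, g z ≠ 0)
    (hfh : ∀ z, 0 ≤ f z + ((h z : ℝ) : EReal))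
    (hg_pos : ∀ z, f z ≠ ⊤ → g z ≠ 0 → 0 < g z)
    (xs : EuclideanSpace ℝ (Fin n)) (hxs : g xs ≠ 0 ∧ f xs ≠ ⊤)
    (cs : ℝ) (hcs : cs = (Ffrac f g h xs).toReal)
    (hmin : ∃ δ > (0 : ℝ), ∀ x, g x ≠ 0 → ‖x - xs‖ < δ →
      f xs + ((h xs - cs * g xs : ℝ) : EReal) ≤ f x + ((h x - cs * g x : ℝ) : EReal)) :
    ∃ δ > (0 : ℝ), ∀ x, g x ≠ 0 ∧ f x ≠ ⊤ → ‖x - xs‖ < δ →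
      ∀ ys ∈ csub g xs,
        f xs ≤ f x + ((⟪h' xs - cs • ys, x - xs⟫ + L / 2 * ‖x - xs‖ ^ 2 : ℝ) : EReal) := by
  have hcs_nonneg : 0 ≤ cs :=
    hcs ▸ EReal.toReal_nonneg (Ffrac_nonneg (hfh xs) (hg_pos xs hxs.2 hxs.1).le)
  obtain ⟨δ, hδ, hkey⟩ := key_inequality_at_parametric_local_min_general (s := {x | g x ≠ 0})
    hcs_nonneg hh_grad (fun z => Real.coe_toNNReal L hL.le ▸ hh_lip.norm_sub_le z xs) hmin
  exact ⟨δ, hδ, fun x hx => hkey x hx.1⟩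
end
end

section
/- Suppose the standing assumptions on f, g, h, Ω, F hold. Let x⋆ ∈ dom(F) and c⋆ := F(x⋆). If there exist α > 0 and y⋆ ∈ ∂g(x⋆) such that x⋆ ∈ prox_{α·f}(x⋆ − α·∇h(x⋆) + α·c⋆·y⋆), then c⋆·y⋆ − ∇h(x⋆) ∈ ∂̂f(x⋆); in particular, x⋆ is a critical point of F, i.e., 0 ∈ ∂̂f(x⋆) + ∇h(x⋆) − c⋆·∂g(x⋆). -/
open Filter Topology
open scoped RealInnerProductSpace

noncomputable section

/-!
Expanding the squares in the minimality of `x` for `α f + ‖· - (x + α v)‖² / 2` gives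
`f x + ⟪v, z - x⟫ ≤ f z + ‖z - x‖² / (2α)` for all `z`: thus `v` is a proximal subgradient of `f`
at `x`. Since the quadratic error is `o(‖z - x‖)`, it is also a Fréchet subgradient. The theorem is
the case `v = c⋆ y⋆ - ∇h(x⋆)`.
-/

open Asymptotics

theorem ereal_neg_div_le_sub_sub_div {a b : EReal} {r s d : ℝ} (ha_bot : a ≠ ⊥) (ha_top : a ≠ ⊤)
    (hd : 0 < d) (hab : a + s ≤ b + r) : ((-(r / d) : ℝ) : EReal) ≤ (b - a - s) / d := by
  lift a to ℝ using ⟨ha_top, ha_bot⟩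
  induction b with
  | bot =>
    rw [EReal.bot_add, le_bot_iff] at hab
    exact absurd hab (EReal.coe_ne_bot (a + s))
  | coe b =>
    norm_cast at hab
    rw [← EReal.coe_sub, ← EReal.coe_sub, ← EReal.coe_div, EReal.coe_le_coe_iff, ← neg_div]
    gcongr
    linarith
  | top =>
    rw [EReal.top_sub_coe, EReal.top_sub_coe,
      EReal.top_div_of_pos_ne_top (EReal.coe_pos.2 hd) (EReal.coe_ne_top d)]
    exact le_top

theorem norm_sub_add_smul_sq {E : Type*} [NormedAddCommGroup E] [InnerProductSpace ℝ E]
    (x z v : E) (α : ℝ) :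
    ‖z - (x + α • v)‖ ^ 2 = ‖z - x‖ ^ 2 - 2 * (α * ⟪v, z - x⟫) + ‖α • v‖ ^ 2 := by
  rw [← sub_sub, norm_sub_sq_real, real_inner_smul_right, real_inner_comm]

section Subdifferential

variable {n : ℕ} {f : EuclideanSpace ℝ (Fin n) → EReal} {x v : EuclideanSpace ℝ (Fin n)}

theorem mem_fsub_of_isLittleO {r : EuclideanSpace ℝ (Fin n) → ℝ} (hx_bot : f x ≠ ⊥)
    (hx_top : f x ≠ ⊤) (hr : r =o[𝓝[≠] x] fun z ↦ ‖z - x‖)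
    (hle : ∀ᶠ z in 𝓝[≠] x, f x + (⟪v, z - x⟫ : ℝ) ≤ f z + r z) : v ∈ fsub f x := by
  refine ⟨hx_top, ?_⟩
  obtain hbot | hne := (𝓝[≠] x).eq_or_neBot
  · simp [hbot]
  have hlim : Tendsto (fun z ↦ ((-(r z / ‖z - x‖) : ℝ) : EReal)) (𝓝[≠] x) (𝓝 0) := by
    have hreal : Tendsto (fun z ↦ -(r z / ‖z - x‖)) (𝓝[≠] x) (𝓝 0) := by
      simpa only [neg_zero] using hr.tendsto_div_nhds_zero.neg
    exact EReal.tendsto_coe.2 hreal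
  rw [← hlim.liminf_eq]
  refine liminf_le_liminf ?_
  filter_upwards [hle, self_mem_nhdsWithin] with z hz hzx
  exact ereal_neg_div_le_sub_sub_div hx_bot hx_top (norm_sub_pos_iff.2 hzx) hz

theorem add_inner_le_add_sq_of_mem_proxSet {α : ℝ} (hα : 0 < α) (hx_bot : f x ≠ ⊥)
    (hx_top : f x ≠ ⊤) (hprox : x ∈ proxSet (fun z ↦ (α : EReal) * f z) (x + α • v))
    (z : EuclideanSpace ℝ (Fin n)) :
    f x + (⟪v, z - x⟫ : ℝ) ≤ f z + (‖z - x‖ ^ 2 / (2 * α) : ℝ) := by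
  have hmin := hprox z
  beta_reduce at hmin
  rw [norm_sub_add_smul_sq x x, norm_sub_add_smul_sq x z, sub_self, inner_zero_right,
    norm_zero] at hmin
  generalize f z = b at hmin ⊢
  lift f x to ℝ using ⟨hx_top, hx_bot⟩ with a
  induction b with
  | bot =>
    rw [EReal.coe_mul_bot_of_pos hα, EReal.bot_add, le_bot_iff] at hmin
    exact absurd hmin (EReal.coe_ne_bot (α * a + _))
  | coe b =>
    norm_cast at hmin ⊢
    refine le_of_mul_le_mul_left ?_ hα
    have hcancel : α * (‖z - x‖ ^ 2 / (2 * α)) = ‖z - x‖ ^ 2 / 2 := by field_simp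
    linarith
  | top => simp only [EReal.top_add_coe, le_top]

theorem mem_fsub_of_mem_proxSet {α : ℝ} (hα : 0 < α) (hx_bot : f x ≠ ⊥) (hx_top : f x ≠ ⊤)
    (hprox : x ∈ proxSet (fun z ↦ (α : EReal) * f z) (x + α • v)) : v ∈ fsub f x := by
  have hquad : (fun z ↦ ‖z - x‖ ^ 2 / (2 * α)) =o[𝓝[≠] x] fun z ↦ ‖z - x‖ := by
    have hsq := (isLittleO_pow_sub_sub x one_lt_two).mono (nhdsWithin_le_nhds (s := {x}ᶜ))
    simpa only [div_eq_inv_mul] using hsq.norm_right.const_mul_left (2 * α)⁻¹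
  exact mem_fsub_of_isLittleO hx_bot hx_top hquad
    (.of_forall (add_inner_le_add_sq_of_mem_proxSet hα hx_bot hx_top hprox))

theorem prox_fixed_point_is_critical_general {g : EuclideanSpace ℝ (Fin n) → ℝ}
    {p y : EuclideanSpace ℝ (Fin n)} {c α : ℝ} (hα : 0 < α) (hx_bot : f x ≠ ⊥) (hx_top : f x ≠ ⊤)
    (hy : y ∈ csub g x)
    (hfix : x ∈ proxSet (fun z ↦ (α : EReal) * f z) (x - α • p + (α * c) • y)) :
    c • y - p ∈ fsub f x ∧
      (0 : EuclideanSpace ℝ (Fin n)) ∈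
        {w | ∃ a ∈ fsub f x, ∃ y ∈ csub g x, w = a + p - c • y} := by
  have hstep : x - α • p + (α * c) • y = x + α • (c • y - p) := by module
  have hsub : c • y - p ∈ fsub f x := mem_fsub_of_mem_proxSet hα hx_bot hx_top (hstep ▸ hfix)
  exact ⟨hsub, c • y - p, hsub, y, hy, by abel⟩

end Subdifferential

/-- Proposition 4.1: a fixed point of the proximity-gradient-subgradient map is a
critical point of F. -/
theorem prox_fixed_point_is_critical
    {n : ℕ} (hn : 1 ≤ n)
    (f : EuclideanSpace ℝ (Fin n) → EReal) (g h : EuclideanSpace ℝ (Fin n) → ℝ)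
    (h' : EuclideanSpace ℝ (Fin n) → EuclideanSpace ℝ (Fin n)) (L : ℝ)
    (hf_ne_bot : ∀ z, f z ≠ ⊥) (hf_proper : ∃ z, f z ≠ ⊤)
    (hf_lsc : LowerSemicontinuous f)
    (hf_bdd : ∃ m : ℝ, ∀ z, (m : EReal) ≤ f z)
    (hf_cont : ContinuousOn f {z | f z ≠ ⊤})
    (hg_cvx : ConvexOn ℝ Set.univ g)
    (hL : 0 < L)
    (hh_grad : ∀ z, HasGradientAt h (h' z) z)
    (hh_lip : LipschitzWith (Real.toNNReal L) h')
    (hΩ : ∃ z, g z ≠ 0)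
    (hfh : ∀ z, 0 ≤ f z + ((h z : ℝ) : EReal))
    (hg_pos : ∀ z, f z ≠ ⊤ → g z ≠ 0 → 0 < g z)
    (xs : EuclideanSpace ℝ (Fin n)) (hxs : g xs ≠ 0 ∧ f xs ≠ ⊤)
    (cs : ℝ) (hcs : cs = (Ffrac f g h xs).toReal)
    (α : ℝ) (hα : 0 < α) (ys : EuclideanSpace ℝ (Fin n)) (hys : ys ∈ csub g xs)
    (hfix : xs ∈ proxSet (fun z => ((α : ℝ) : EReal) * f z)
      (xs - α • h' xs + (α * cs) • ys)) :
    cs • ys - h' xs ∈ fsub f xs ∧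
      (0 : EuclideanSpace ℝ (Fin n)) ∈
        {w | ∃ a ∈ fsub f xs, ∃ y ∈ csub g xs, w = a + h' xs - cs • y} :=
  prox_fixed_point_is_critical_general hα (hf_ne_bot xs) hxs.2 hys hfix
end
end

section
/- Suppose the standing assumptions on f, g, h, Ω, F hold and let (x^k), (y^k), (c_k), (α_k) be generated by PGSA. Then x^k ∈ dom(F) for every k ∈ ℕ, and for every k ∈ ℕ: f(x^{k+1}) + h(x^{k+1}) + ((1/α_k − L)/2)·‖x^{k+1} − x^k‖₂² ≤ c_k·g(x^{k+1}). -/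
open Filter Topology
open scoped RealInnerProductSpace

noncomputable section

/-!
Comparing the proximal minimizer `p` with the current iterate `x` gives
`f p + ⟨∇h x - c y, p - x⟩ + ‖p - x‖² / (2α) ≤ f x`. Adding the descent lemma for `h` and the
subgradient inequality for `g`, both taken at `x`, yields the descent inequality because `c` is the
value of the quotient at `x`. If `g p` vanished, `0 ≤ f p + h p` would force `‖p - x‖² ≤ 0`, so the
iterate would not have moved and `g x` would already have been zero.
-/

open scoped NNReal

section EReal

theorem ereal_le_of_coe_mul_le_coe_mul {a : ℝ} (ha : 0 < a) {s t : EReal}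
    (h : (a : EReal) * s ≤ a * t) : s ≤ t := by
  have hcancel (u : EReal) : (a : EReal) * u / a = u := by
    rw [mul_comm, ← EReal.mul_div_right,
      EReal.div_mul_cancel (EReal.coe_ne_bot a) (EReal.coe_ne_top a) (EReal.coe_ne_zero.2 ha.ne')]
  simpa only [hcancel] using EReal.div_le_div_right_of_nonneg (EReal.coe_nonneg.2 ha.le) h

theorem ereal_coe_toReal_add {s : EReal} {r : ℝ} (hs : s ≠ ⊤) (hsr : 0 ≤ s + r) :
    ((s.toReal + r : ℝ) : EReal) = s + r := by
  have hbot : s ≠ ⊥ := by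
    rintro rfl
    simp at hsr
  rw [EReal.coe_add, EReal.coe_toReal hs hbot]

theorem ereal_ne_top_of_add_coe_le_coe {s : EReal} {q r : ℝ} (h : s + q ≤ r) : s ≠ ⊤ := by
  rintro rfl
  simp at h

end EReal

section DescentLemma

variable {E : Type*} [NormedAddCommGroup E] [InnerProductSpace ℝ E]

theorem inner_apply_add_smul_le_of_lipschitzWith {u : E → E} {K : ℝ≥0} (hu : LipschitzWith K u)
    (x d : E) {t : ℝ} (ht : 0 ≤ t) :
    ⟪u (x + t • d), d⟫ ≤ ⟪u x, d⟫ + K * t * ‖d‖ ^ 2 := by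
  have hnorm : ‖u (x + t • d) - u x‖ ≤ K * (t * ‖d‖) := by
    simpa [norm_smul, abs_of_nonneg ht] using hu.norm_sub_le (x + t • d) x
  calc ⟪u (x + t • d), d⟫ = ⟪u x, d⟫ + ⟪u (x + t • d) - u x, d⟫ := by
        rw [inner_sub_left, add_sub_cancel]
    _ ≤ ⟪u x, d⟫ + ‖u (x + t • d) - u x‖ * ‖d‖ := by gcongr; exact real_inner_le_norm _ _
    _ ≤ ⟪u x, d⟫ + K * (t * ‖d‖) * ‖d‖ := by gcongr
    _ = ⟪u x, d⟫ + K * t * ‖d‖ ^ 2 := by ring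

variable [CompleteSpace E]

theorem hasDerivAt_comp_add_smul_of_hasGradientAt {φ : E → ℝ} {v x d : E} {t : ℝ}
    (hφ : HasGradientAt φ v (x + t • d)) :
    HasDerivAt (fun s : ℝ => φ (x + s • d)) ⟪v, d⟫ t := by
  have hline : HasDerivAt (fun s : ℝ => x + s • d) d t := by
    simpa using ((hasDerivAt_id t).smul_const d).const_add x
  simpa [Function.comp_def] using hφ.hasFDerivAt.comp_hasDerivAt t hline

theorem le_add_inner_add_sq_of_lipschitzWith_gradient {φ : E → ℝ} {φ' : E → E} {K : ℝ≥0}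
    (hgrad : ∀ z, HasGradientAt φ (φ' z) z) (hlip : LipschitzWith K φ') (x z : E) :
    φ z ≤ φ x + ⟪φ' x, z - x⟫ + K / 2 * ‖z - x‖ ^ 2 := by
  set d := z - x with hd
  have hsegment (t : ℝ) : HasDerivAt (fun s : ℝ => φ (x + s • d)) ⟪φ' (x + t • d), d⟫ t :=
    hasDerivAt_comp_add_smul_of_hasGradientAt (hgrad _)
  have hmodel (t : ℝ) :
      HasDerivAt (fun s : ℝ => φ x + s * ⟪φ' x, d⟫ + s ^ 2 * (K / 2 * ‖d‖ ^ 2))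
        (⟪φ' x, d⟫ + K * t * ‖d‖ ^ 2) t := by
    refine ((((hasDerivAt_id t).mul_const ⟪φ' x, d⟫).const_add (φ x)).add
      ((hasDerivAt_pow 2 t).mul_const (K / 2 * ‖d‖ ^ 2))).congr_deriv ?_
    norm_num
    ring
  have hle := image_le_of_deriv_right_le_deriv_boundary
    (fun t _ => (hsegment t).continuousAt.continuousWithinAt)
    (fun t _ => (hsegment t).hasDerivWithinAt) (by simp)
    (fun t _ => (hmodel t).continuousAt.continuousWithinAt)
    (fun t _ => (hmodel t).hasDerivWithinAt)
    (fun t ht => inner_apply_add_smul_le_of_lipschitzWith hlip x d ht.1)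
    (Set.right_mem_Icc.2 zero_le_one)
  simpa [hd] using hle

end DescentLemma

section ProximalStep

variable {E : Type*} [NormedAddCommGroup E] [InnerProductSpace ℝ E]

theorem norm_sub_sub_smul_sq (α : ℝ) (p v x : E) :
    ‖p - (x - α • v)‖ ^ 2 = ‖p - x‖ ^ 2 + 2 * α * ⟪v, p - x⟫ + α ^ 2 * ‖v‖ ^ 2 := by
  have hsplit : p - (x - α • v) = (p - x) + α • v := by module
  rw [hsplit, norm_add_sq_real, norm_smul, real_inner_smul_right, real_inner_comm, mul_pow,
    Real.norm_eq_abs, sq_abs, mul_assoc]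

theorem add_inner_add_sq_le_of_isMinOn_prox {f : E → EReal} {α : ℝ} (hα : 0 < α) {p v x : E}
    (hp : IsMinOn (fun z => (α : EReal) * f z + ((‖z - (x - α • v)‖ ^ 2 / 2 : ℝ) : EReal))
      Set.univ p) :
    f p + ((⟪v, p - x⟫ + 1 / α / 2 * ‖p - x‖ ^ 2 : ℝ) : EReal) ≤ f x := by
  suffices hscaled : (α : EReal) * (f p + ((⟪v, p - x⟫ + 1 / α / 2 * ‖p - x‖ ^ 2 : ℝ) : EReal)) +
      ((α ^ 2 * ‖v‖ ^ 2 / 2 : ℝ) : EReal) ≤ α * f x + ((α ^ 2 * ‖v‖ ^ 2 / 2 : ℝ) : EReal) from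
    ereal_le_of_coe_mul_le_coe_mul hα
      ((EReal.addLECancellable_coe _).add_le_add_iff_right.1 hscaled)
  rw [EReal.left_distrib_of_nonneg_of_ne_top (EReal.coe_nonneg.2 hα.le) (EReal.coe_ne_top α),
    add_assoc, ← EReal.coe_mul, ← EReal.coe_add]
  convert isMinOn_univ_iff.1 hp x using 3
  · rw [norm_sub_sub_smul_sq]
    field_simp
    ring
  · rw [norm_sub_sub_smul_sq]
    simp

/-- A single PGSA step from `x` to `p` with step size `α`, subgradient `y` of `g` at `x` and
multiplier `c`, where `h'` stands for the gradient of the smooth part. The iteration takes for `c`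
the quotient at `x`; here it is a free parameter. -/
structure IsPGSAStep (f : E → EReal) (g : E → ℝ) (h' : E → E) (α c : ℝ) (x y p : E) : Prop where
  subgradient : ∀ z, g x + ⟪y, z - x⟫ ≤ g z
  isMinOn_prox : IsMinOn (fun z => (α : EReal) * f z +
    ((‖z - (x - α • h' x + (α * c) • y)‖ ^ 2 / 2 : ℝ) : EReal)) Set.univ p

namespace IsPGSAStep

variable {f : E → EReal} {g h : E → ℝ} {h' : E → E} {α c : ℝ} {x y p : E} {K : ℝ≥0}

theorem add_inner_add_sq_le (hstep : IsPGSAStep f g h' α c x y p) (hα : 0 < α) :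
    f p + ((⟪h' x, p - x⟫ - c * ⟪y, p - x⟫ + 1 / α / 2 * ‖p - x‖ ^ 2 : ℝ) : EReal) ≤ f x := by
  have hcenter : x - α • h' x + (α * c) • y = x - α • (h' x - c • y) := by module
  have hprox := hstep.isMinOn_prox
  rw [hcenter] at hprox
  simpa only [inner_sub_left, real_inner_smul_left] using
    add_inner_add_sq_le_of_isMinOn_prox hα hprox

theorem descent [CompleteSpace E] (hstep : IsPGSAStep f g h' α c x y p)
    (hgrad : ∀ z, HasGradientAt h (h' z) z) (hlip : LipschitzWith K h') (hα : 0 < α) (hc : 0 ≤ c)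
    (hquot : f x + (h x : EReal) = ((c * g x : ℝ) : EReal)) :
    f p + ((h p + (1 / α - K) / 2 * ‖p - x‖ ^ 2 : ℝ) : EReal) ≤ ((c * g p : ℝ) : EReal) := by
  have hsmooth : h p ≤ h x + ⟪h' x, p - x⟫ + K / 2 * ‖p - x‖ ^ 2 :=
    le_add_inner_add_sq_of_lipschitzWith_gradient hgrad hlip x p
  have hsubgrad : c * (g x + ⟪y, p - x⟫) ≤ c * g p :=
    mul_le_mul_of_nonneg_left (hstep.subgradient p) hc
  calc f p + ((h p + (1 / α - K) / 2 * ‖p - x‖ ^ 2 : ℝ) : EReal)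
      ≤ f p + (((⟪h' x, p - x⟫ - c * ⟪y, p - x⟫ + 1 / α / 2 * ‖p - x‖ ^ 2) +
          (h x + c * ⟪y, p - x⟫) : ℝ) : EReal) := by
        refine add_le_add_right (EReal.coe_le_coe ?_) (f p)
        linarith
    _ ≤ f x + ((h x + c * ⟪y, p - x⟫ : ℝ) : EReal) := by
        rw [EReal.coe_add, ← add_assoc]
        gcongr
        exact hstep.add_inner_add_sq_le hα
    _ = ((c * (g x + ⟪y, p - x⟫) : ℝ) : EReal) := by
        rw [EReal.coe_add, ← add_assoc, hquot, ← EReal.coe_add, mul_add]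
    _ ≤ ((c * g p : ℝ) : EReal) := EReal.coe_le_coe hsubgrad

end IsPGSAStep

end ProximalStep

theorem denominator_ne_zero_of_descent {E : Type*} [NormedAddCommGroup E] {a : EReal}
    {g : E → ℝ} {b β c : ℝ} {x p : E} (hβ : 0 < β) (hab : 0 ≤ a + b) (hx : g x ≠ 0)
    (hdescent : a + ((b + β * ‖p - x‖ ^ 2 : ℝ) : EReal) ≤ ((c * g p : ℝ) : EReal)) :
    g p ≠ 0 := by
  intro hp
  have hquad : β * ‖p - x‖ ^ 2 ≤ 0 := by
    rw [← EReal.coe_le_coe_iff]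
    calc ((β * ‖p - x‖ ^ 2 : ℝ) : EReal) ≤ (a + b) + ((β * ‖p - x‖ ^ 2 : ℝ) : EReal) :=
          le_add_of_nonneg_left hab
      _ = a + ((b + β * ‖p - x‖ ^ 2 : ℝ) : EReal) := by rw [EReal.coe_add, add_assoc]
      _ ≤ ((c * g p : ℝ) : EReal) := hdescent
      _ = ((0 : ℝ) : EReal) := by rw [hp, mul_zero]
  have hnorm : ‖p - x‖ ^ 2 ≤ 0 := nonpos_of_mul_nonpos_right hquad hβ
  have hfixed : p = x := by
    simpa [sub_eq_zero] using hnorm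
  exact hx (hfixed ▸ hp)

theorem pgsa_iterates_in_domain_and_descent_general {E : Type*} [NormedAddCommGroup E]
    [InnerProductSpace ℝ E] [CompleteSpace E] {f : E → EReal} {g h : E → ℝ} {h' : E → E} {K : ℝ≥0}
    (hgrad : ∀ z, HasGradientAt h (h' z) z) (hlip : LipschitzWith K h')
    (hfh : ∀ z, 0 ≤ f z + (h z : EReal)) (hg_pos : ∀ z, f z ≠ ⊤ → g z ≠ 0 → 0 < g z)
    {x y : ℕ → E} {c α : ℕ → ℝ} (hx0 : g (x 0) ≠ 0 ∧ f (x 0) ≠ ⊤)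
    (hα_pos : ∀ k, 0 < α k) (hα_lt : ∀ k, α k * K < 1)
    (hc : ∀ k, c k = ((f (x k)).toReal + h (x k)) / g (x k))
    (hstep : ∀ k, IsPGSAStep f g h' (α k) (c k) (x k) (y (k + 1)) (x (k + 1))) :
    (∀ k, g (x k) ≠ 0 ∧ f (x k) ≠ ⊤) ∧
      ∀ k, f (x (k + 1)) +
          ((h (x (k + 1)) + (1 / α k - K) / 2 * ‖x (k + 1) - x k‖ ^ 2 : ℝ) : EReal) ≤
        ((c k * g (x (k + 1)) : ℝ) : EReal) := by
  have hdescent (k : ℕ) (hk : g (x k) ≠ 0 ∧ f (x k) ≠ ⊤) : f (x (k + 1)) +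
      ((h (x (k + 1)) + (1 / α k - K) / 2 * ‖x (k + 1) - x k‖ ^ 2 : ℝ) : EReal) ≤
        ((c k * g (x (k + 1)) : ℝ) : EReal) := by
    have hsum := ereal_coe_toReal_add hk.2 (hfh (x k))
    have hnum : 0 ≤ (f (x k)).toReal + h (x k) := EReal.coe_nonneg.1 (hsum ▸ hfh (x k))
    have hc_nonneg : 0 ≤ c k := hc k ▸ div_nonneg hnum (hg_pos _ hk.2 hk.1).le
    refine (hstep k).descent hgrad hlip (hα_pos k) hc_nonneg ?_
    rw [hc k, div_mul_cancel₀ _ hk.1, hsum]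
  have hdom (k : ℕ) : g (x k) ≠ 0 ∧ f (x k) ≠ ⊤ := by
    induction k with
    | zero => exact hx0
    | succ k ih =>
      have hcoeff : 0 < (1 / α k - K) / 2 :=
        half_pos (sub_pos.2 ((lt_div_iff₀' (hα_pos k)).2 (hα_lt k)))
      exact ⟨denominator_ne_zero_of_descent hcoeff (hfh _) ih.1 (hdescent k ih),
        ereal_ne_top_of_add_coe_le_coe (hdescent k ih)⟩
  exact ⟨hdom, fun k => hdescent k (hdom k)⟩

/-- Lemma 4.2: the PGSA iterates stay in dom F and satisfy the basic descent inequality. -/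
theorem pgsa_iterates_in_domain_and_descent
    {n : ℕ} (hn : 1 ≤ n)
    (f : EuclideanSpace ℝ (Fin n) → EReal) (g h : EuclideanSpace ℝ (Fin n) → ℝ)
    (h' : EuclideanSpace ℝ (Fin n) → EuclideanSpace ℝ (Fin n)) (L : ℝ)
    (hf_ne_bot : ∀ z, f z ≠ ⊥) (hf_proper : ∃ z, f z ≠ ⊤)
    (hf_lsc : LowerSemicontinuous f)
    (hf_bdd : ∃ m : ℝ, ∀ z, (m : EReal) ≤ f z)
    (hf_cont : ContinuousOn f {z | f z ≠ ⊤})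
    (hg_cvx : ConvexOn ℝ Set.univ g)
    (hL : 0 < L)
    (hh_grad : ∀ z, HasGradientAt h (h' z) z)
    (hh_lip : LipschitzWith (Real.toNNReal L) h')
    (hΩ : ∃ z, g z ≠ 0)
    (hfh : ∀ z, 0 ≤ f z + ((h z : ℝ) : EReal))
    (hg_pos : ∀ z, f z ≠ ⊤ → g z ≠ 0 → 0 < g z)
    (x y : ℕ → EuclideanSpace ℝ (Fin n)) (c α : ℕ → ℝ) (αlo αhi : ℝ)
    (hx0 : g (x 0) ≠ 0 ∧ f (x 0) ≠ ⊤)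
    (hαlo : 0 < αlo) (hαhi : αhi < 1 / L) (hα : ∀ k, αlo ≤ α k ∧ α k ≤ αhi)
    (hy : ∀ k, y (k + 1) ∈ csub g (x k))
    (hc : ∀ k, c k = ((f (x k)).toReal + h (x k)) / g (x k))
    (hiter : ∀ k, x (k + 1) ∈ proxSet (fun z => ((α k : ℝ) : EReal) * f z)
      (x k - α k • h' (x k) + (α k * c k) • y (k + 1)))
    : (∀ k, g (x k) ≠ 0 ∧ f (x k) ≠ ⊤) ∧
      ∀ k, f (x (k + 1)) +
          ((h (x (k + 1)) + (1 / α k - L) / 2 * ‖x (k + 1) - x k‖ ^ 2 : ℝ) : EReal) ≤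
        ((c k * g (x (k + 1)) : ℝ) : EReal) := by
  have hα_lt (k : ℕ) : α k * L < 1 := (lt_div_iff₀ hL).1 ((hα k).2.trans_lt hαhi)
  rw [← Real.coe_toNNReal L hL.le] at hα_lt ⊢
  exact pgsa_iterates_in_domain_and_descent_general hh_grad hh_lip hfh hg_pos hx0
    (fun k => hαlo.trans_le (hα k).1) hα_lt hc
    (fun k => ⟨hy k, isMinOn_univ_iff.2 (hiter k)⟩)
end
end

section
/- Suppose the standing assumptions on f, g, h, Ω, F hold and let (x^k), (y^k), (c_k), (α_k) be generated by PGSA. Then: (i) for every k ∈ ℕ, F(x^{k+1}) + ((1/α_k − L)/(2·g(x^{k+1})))·‖x^{k+1} − x^k‖₂² ≤ F(x^k); (ii) the sequence (c_k) = (F(x^k)) converges to some real c with c ≥ 0; (iii) ((1/α_k − L)/g(x^{k+1}))·‖x^{k+1} − x^k‖₂² → 0 as k → ∞. -/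
open Filter Topology
open scoped RealInnerProductSpace

noncomputable section

/-!
The prox step compares `x⁺` with the competitor `x`. Adding the quadratic upper bound for `h` and
`c` times the subgradient inequality for `g`, with `c = F x`, cancels all first-order terms and
leaves `f x⁺ + h x⁺ + (1/α - L)/2 ‖x⁺ - x‖² ≤ c g x⁺`. If `g x⁺` vanished, nonnegativity of `f + h`
would force `x⁺ = x`, where `g ≠ 0`; so the iterates stay in `dom F`, and dividing by `g x⁺ > 0`
gives the sufficient decrease of `F`. The values `F xᵏ` are then nonincreasing and bounded below,
hence convergent, and their consecutive differences dominate the decrease terms.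
-/

open scoped NNReal

theorem le_add_fderiv_add_sq_of_lipschitzWith {E : Type*} [NormedAddCommGroup E]
    [NormedSpace ℝ E] {h : E → ℝ} {h' : E → StrongDual ℝ E} {L : ℝ≥0}
    (hh : ∀ z, HasFDerivAt h (h' z) z) (hlip : LipschitzWith L h') (a b : E) :
    h b ≤ h a + h' a (b - a) + L / 2 * ‖b - a‖ ^ 2 := by
  set d := b - a with hd
  have hderiv (t : ℝ) : HasDerivAt (fun t : ℝ => h (a + t • d)) (h' (a + t • d) d) t := by
    have hline : HasDerivAt (fun t : ℝ => a + t • d) d t := by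
      simpa using ((hasDerivAt_id t).smul_const d).const_add a
    exact (hh _).comp_hasDerivAt t hline
  have hbound (t : ℝ) : HasDerivAt (fun t : ℝ => h a + t * h' a d + L / 2 * ‖d‖ ^ 2 * t ^ 2)
      (h' a d + L * ‖d‖ ^ 2 * t) t := by
    refine ((((hasDerivAt_id t).mul_const (h' a d)).const_add (h a)).add
      ((hasDerivAt_pow 2 t).const_mul (L / 2 * ‖d‖ ^ 2))).congr_deriv ?_
    push_cast
    ring
  have hderiv_le (t : ℝ) (ht : 0 ≤ t) : h' (a + t • d) d ≤ h' a d + L * ‖d‖ ^ 2 * t := by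
    rw [← sub_le_iff_le_add']
    calc h' (a + t • d) d - h' a d
        ≤ ‖h' (a + t • d) - h' a‖ * ‖d‖ :=
          (le_abs_self _).trans ((h' (a + t • d) - h' a).le_opNorm d)
      _ ≤ L * ‖t • d‖ * ‖d‖ := by
          gcongr
          simpa using hlip.norm_sub_le (a + t • d) a
      _ = L * ‖d‖ ^ 2 * t := by
          rw [norm_smul, Real.norm_of_nonneg ht]
          ring
  have hone := image_le_of_deriv_right_le_deriv_boundary
    (fun t _ => (hderiv t).continuousAt.continuousWithinAt)
    (fun t _ => (hderiv t).hasDerivWithinAt) (by simp)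
    (fun t _ => (hbound t).continuousAt.continuousWithinAt)
    (fun t _ => (hbound t).hasDerivWithinAt) (fun t ht => hderiv_le t ht.1)
    (Set.right_mem_Icc.2 zero_le_one)
  simpa [hd] using hone

theorem le_add_inner_add_sq_of_lipschitzWith_gradient_s6 {H : Type*} [NormedAddCommGroup H]
    [InnerProductSpace ℝ H] [CompleteSpace H] {h : H → ℝ} {h' : H → H} {L : ℝ≥0}
    (hh : ∀ z, HasGradientAt h (h' z) z) (hlip : LipschitzWith L h') (a b : H) :
    h b ≤ h a + ⟪h' a, b - a⟫ + L / 2 * ‖b - a‖ ^ 2 := by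
  have hlip_dual : LipschitzWith L (InnerProductSpace.toDual ℝ H ∘ h') := by
    simpa only [one_mul] using (InnerProductSpace.toDual ℝ H).lipschitz.comp hlip
  exact le_add_fderiv_add_sq_of_lipschitzWith (fun z => (hh z).hasFDerivAt) hlip_dual a b

theorem exists_tendsto_and_tendsto_zero_of_add_le {c δ : ℕ → ℝ} {m : ℝ} (hm : ∀ k, m ≤ c k)
    (hδ : ∀ k, 0 ≤ δ k) (hdecr : ∀ k, c (k + 1) + δ k ≤ c k) :
    ∃ l, m ≤ l ∧ Tendsto c atTop (𝓝 l) ∧ Tendsto δ atTop (𝓝 0) := by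
  have hanti : Antitone c :=
    antitone_nat_of_succ_le fun k => (le_add_of_nonneg_right (hδ k)).trans (hdecr k)
  have hlim : Tendsto c atTop (𝓝 (⨅ k, c k)) :=
    tendsto_atTop_ciInf hanti ⟨m, Set.forall_mem_range.2 hm⟩
  have hgap : Tendsto (fun k => c k - c (k + 1)) atTop (𝓝 0) := by
    simpa using hlim.sub (hlim.comp (tendsto_add_atTop_nat 1))
  exact ⟨⨅ k, c k, le_ciInf hm, hlim,
    squeeze_zero hδ (fun k => le_sub_iff_add_le'.2 (hdecr k)) hgap⟩

section ProxStep

variable {E : Type*} [NormedAddCommGroup E]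

theorem ne_top_of_isMinOn_prox {f : E → EReal} {α : ℝ} {u x p : E} (hα : 0 < α) (hx : f x ≠ ⊤)
    (hp : IsMinOn (fun z => (α : EReal) * f z + ((‖z - u‖ ^ 2 / 2 : ℝ) : EReal)) Set.univ p) :
    f p ≠ ⊤ := by
  intro hp_top
  have hle := isMinOn_univ_iff.1 hp x
  rw [hp_top, EReal.coe_mul_top_of_pos hα, EReal.top_add_coe, top_le_iff] at hle
  refine EReal.add_ne_top ?_ (EReal.coe_ne_top _) hle
  simp [EReal.mul_ne_top, hx, hα.le]

variable [InnerProductSpace ℝ E]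

theorem toReal_add_inner_add_sq_le_of_isMinOn_prox {f : E → EReal} (hf : ∀ z, f z ≠ ⊥) {α : ℝ}
    {w x p : E} (hα : 0 < α) (hx : f x ≠ ⊤)
    (hp : IsMinOn (fun z => (α : EReal) * f z + ((‖z - (x - α • w)‖ ^ 2 / 2 : ℝ) : EReal))
      Set.univ p) :
    (f p).toReal + ⟪w, p - x⟫ + 1 / α / 2 * ‖p - x‖ ^ 2 ≤ (f x).toReal := by
  have hle := isMinOn_univ_iff.1 hp x
  rw [← EReal.coe_toReal hx (hf x), ← EReal.coe_toReal (ne_top_of_isMinOn_prox hα hx hp) (hf p)]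
    at hle
  norm_cast at hle
  have hnorm_p : ‖p - (x - α • w)‖ ^ 2
      = ‖p - x‖ ^ 2 + 2 * (α * ⟪w, p - x⟫) + ‖α • w‖ ^ 2 := by
    rw [show p - (x - α • w) = (p - x) + α • w by abel, norm_add_sq_real, inner_smul_right,
      real_inner_comm]
  rw [hnorm_p, sub_sub_cancel] at hle
  refine le_of_mul_le_mul_left ?_ hα
  calc α * ((f p).toReal + ⟪w, p - x⟫ + 1 / α / 2 * ‖p - x‖ ^ 2)
      = α * (f p).toReal + α * ⟪w, p - x⟫ + ‖p - x‖ ^ 2 / 2 := by field_simp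
    _ ≤ α * (f x).toReal := by linarith

end ProxStep

theorem ne_bot_of_add_coe_nonneg {a : EReal} {r : ℝ} (h : 0 ≤ a + r) : a ≠ ⊥ := by
  rintro rfl
  simp at h

theorem toReal_add_nonneg_of_add_coe_nonneg {a : EReal} {r : ℝ} (h : 0 ≤ a + r) (ha : a ≠ ⊤) :
    0 ≤ a.toReal + r := by
  rw [← EReal.coe_toReal ha (ne_bot_of_add_coe_nonneg h)] at h
  exact_mod_cast h

section Step

variable {E : Type*} [NormedAddCommGroup E] {f : E → EReal} {g h : E → ℝ} {x p w y : E}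
  {α c L : ℝ}

theorem ne_zero_of_nonneg_of_add_sq_le_mul {a δ : ℝ} (ha : 0 ≤ a) (hδ : 0 < δ) (hx : g x ≠ 0)
    (hle : a + δ * ‖p - x‖ ^ 2 ≤ c * g p) : g p ≠ 0 := by
  intro hgp
  have hpx : p = x := by
    rw [← sub_eq_zero, ← norm_eq_zero]
    by_contra hne
    have : 0 < δ * ‖p - x‖ ^ 2 := by positivity
    rw [hgp, mul_zero] at hle
    linarith
  exact hx (hpx ▸ hgp)

variable [InnerProductSpace ℝ E]

theorem toReal_add_add_sq_le_mul_of_isMinOn_prox (hf : ∀ z, f z ≠ ⊥) (hα : 0 < α) (hx : f x ≠ ⊤)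
    (hc : 0 ≤ c) (hcx : c * g x = (f x).toReal + h x) (hgp : g x + ⟪y, p - x⟫ ≤ g p)
    (hhp : h p ≤ h x + ⟪w, p - x⟫ + L / 2 * ‖p - x‖ ^ 2)
    (hp : IsMinOn (fun z => (α : EReal) * f z +
      ((‖z - (x - α • (w - c • y))‖ ^ 2 / 2 : ℝ) : EReal)) Set.univ p) :
    (f p).toReal + h p + (1 / α - L) / 2 * ‖p - x‖ ^ 2 ≤ c * g p := by
  have hprox := toReal_add_inner_add_sq_le_of_isMinOn_prox hf hα hx hp
  rw [inner_sub_left, real_inner_smul_left] at hprox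
  have hsubgrad := mul_le_mul_of_nonneg_left hgp hc
  linarith

theorem mem_dom_and_sufficient_decrease_of_pgsa_step (hfh : ∀ z, 0 ≤ f z + (h z : EReal))
    (hg_pos : ∀ z, f z ≠ ⊤ → g z ≠ 0 → 0 < g z) (hα : 0 < α) (hαL : L < 1 / α)
    (hx : g x ≠ 0 ∧ f x ≠ ⊤) (hc : c = ((f x).toReal + h x) / g x) (hgp : g x + ⟪y, p - x⟫ ≤ g p)
    (hhp : h p ≤ h x + ⟪w, p - x⟫ + L / 2 * ‖p - x‖ ^ 2)
    (hp : IsMinOn (fun z => (α : EReal) * f z +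
      ((‖z - (x - α • w + (α * c) • y)‖ ^ 2 / 2 : ℝ) : EReal)) Set.univ p) :
    (g p ≠ 0 ∧ f p ≠ ⊤) ∧
      ((f p).toReal + h p) / g p + (1 / α - L) / (2 * g p) * ‖p - x‖ ^ 2 ≤ c := by
  have hc_nonneg : 0 ≤ c :=
    hc ▸ div_nonneg (toReal_add_nonneg_of_add_coe_nonneg (hfh _) hx.2) (hg_pos x hx.2 hx.1).le
  have hcx : c * g x = (f x).toReal + h x := by rw [hc, div_mul_cancel₀ _ hx.1]
  rw [show x - α • w + (α * c) • y = x - α • (w - c • y) by module] at hp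
  have hmul := toReal_add_add_sq_le_mul_of_isMinOn_prox (fun z => ne_bot_of_add_coe_nonneg (hfh z))
    hα hx.2 hc_nonneg hcx hgp hhp hp
  have hfp : f p ≠ ⊤ := ne_top_of_isMinOn_prox hα hx.2 hp
  have hgp_ne : g p ≠ 0 := ne_zero_of_nonneg_of_add_sq_le_mul
    (toReal_add_nonneg_of_add_coe_nonneg (hfh _) hfp) (half_pos (sub_pos.2 hαL)) hx.1 hmul
  refine ⟨⟨hgp_ne, hfp⟩, ?_⟩
  calc ((f p).toReal + h p) / g p + (1 / α - L) / (2 * g p) * ‖p - x‖ ^ 2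
      = ((f p).toReal + h p + (1 / α - L) / 2 * ‖p - x‖ ^ 2) / g p := by
        rw [add_div ((f p).toReal + h p), ← div_div, div_mul_eq_mul_div]
    _ ≤ c := (div_le_iff₀ (hg_pos p hfp hgp_ne)).2 hmul

end Step

/-- The extended-real-valued quotient `(f + h) / g`, set to `+∞` where `g` vanishes or `f = +∞`:
`Ffrac` on an arbitrary type. The numerator uses `(f x).toReal`, which is `f x` as long as
`f x ≠ -∞`. -/
def fractionalObjective {E : Type*} (f : E → EReal) (g h : E → ℝ) (x : E) : EReal :=
  if g x ≠ 0 ∧ f x ≠ ⊤ then ((((f x).toReal + h x) / g x : ℝ) : EReal) else ⊤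

theorem pgsa_objective_value_convergence_general
    {E : Type*} [NormedAddCommGroup E] [InnerProductSpace ℝ E] [CompleteSpace E]
    {f : E → EReal} {g h : E → ℝ} {h' : E → E} {L : ℝ≥0}
    (hh_grad : ∀ z, HasGradientAt h (h' z) z) (hh_lip : LipschitzWith L h')
    (hfh : ∀ z, 0 ≤ f z + (h z : EReal)) (hg_pos : ∀ z, f z ≠ ⊤ → g z ≠ 0 → 0 < g z)
    {x y : ℕ → E} {c α : ℕ → ℝ} (hx0 : g (x 0) ≠ 0 ∧ f (x 0) ≠ ⊤)
    (hα : ∀ k, 0 < α k) (hαL : ∀ k, L < 1 / α k)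
    (hy : ∀ k z, g (x k) + ⟪y (k + 1), z - x k⟫ ≤ g z)
    (hc : ∀ k, c k = ((f (x k)).toReal + h (x k)) / g (x k))
    (hiter : ∀ k, IsMinOn (fun z => (α k : EReal) * f z +
      ((‖z - (x k - α k • h' (x k) + (α k * c k) • y (k + 1))‖ ^ 2 / 2 : ℝ) : EReal))
      Set.univ (x (k + 1))) :
    (∀ k, fractionalObjective f g h (x (k + 1)) +
          (((1 / α k - L) / (2 * g (x (k + 1))) * ‖x (k + 1) - x k‖ ^ 2 : ℝ) : EReal) ≤
        fractionalObjective f g h (x k)) ∧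
      (∃ cl : ℝ, 0 ≤ cl ∧ Tendsto c atTop (𝓝 cl) ∧
        Tendsto (fun k => fractionalObjective f g h (x k)) atTop (𝓝 (cl : EReal))) ∧
      Tendsto (fun k => (1 / α k - L) / g (x (k + 1)) * ‖x (k + 1) - x k‖ ^ 2)
        atTop (𝓝 0) := by
  have hstep (k : ℕ) (hk : g (x k) ≠ 0 ∧ f (x k) ≠ ⊤) :=
    mem_dom_and_sufficient_decrease_of_pgsa_step hfh hg_pos (hα k) (hαL k) hk (hc k)
      (hy k (x (k + 1))) (le_add_inner_add_sq_of_lipschitzWith_gradient_s6 hh_grad hh_lip _ _)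
      (hiter k)
  have hdom (k : ℕ) : g (x k) ≠ 0 ∧ f (x k) ≠ ⊤ := k.rec hx0 fun k hk => (hstep k hk).1
  have hgx (k : ℕ) : 0 < g (x k) := hg_pos _ (hdom k).2 (hdom k).1
  have hobj (k : ℕ) : fractionalObjective f g h (x k) = c k :=
    (if_pos (hdom k)).trans (congrArg _ (hc k).symm)
  have hdecr (k : ℕ) :
      c (k + 1) + (1 / α k - L) / (2 * g (x (k + 1))) * ‖x (k + 1) - x k‖ ^ 2 ≤ c k :=
    hc (k + 1) ▸ (hstep k (hdom k)).2
  have hc_nonneg (k : ℕ) : 0 ≤ c k :=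
    hc k ▸ div_nonneg (toReal_add_nonneg_of_add_coe_nonneg (hfh _) (hdom k).2) (hgx k).le
  have hδ_nonneg (k : ℕ) :
      0 ≤ (1 / α k - L) / (2 * g (x (k + 1))) * ‖x (k + 1) - x k‖ ^ 2 :=
    mul_nonneg (div_nonneg (sub_pos.2 (hαL k)).le (mul_pos two_pos (hgx _)).le) (sq_nonneg _)
  obtain ⟨cl, hcl, hlim, hδ_lim⟩ :=
    exists_tendsto_and_tendsto_zero_of_add_le hc_nonneg hδ_nonneg hdecr
  simp only [hobj]
  refine ⟨fun k => mod_cast hdecr k,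
    ⟨cl, hcl, hlim, (continuous_coe_real_ereal.tendsto cl).comp hlim⟩, ?_⟩
  convert hδ_lim.const_mul 2 using 2 with k
  · rw [← div_div, div_right_comm]
    ring
  · simp

/-- Theorem 4.3: monotonicity and convergence of the objective values along PGSA. -/
theorem pgsa_objective_value_convergence
    {n : ℕ} (hn : 1 ≤ n)
    (f : EuclideanSpace ℝ (Fin n) → EReal) (g h : EuclideanSpace ℝ (Fin n) → ℝ)
    (h' : EuclideanSpace ℝ (Fin n) → EuclideanSpace ℝ (Fin n)) (L : ℝ)
    (hf_ne_bot : ∀ z, f z ≠ ⊥) (hf_proper : ∃ z, f z ≠ ⊤)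
    (hf_lsc : LowerSemicontinuous f)
    (hf_bdd : ∃ m : ℝ, ∀ z, (m : EReal) ≤ f z)
    (hf_cont : ContinuousOn f {z | f z ≠ ⊤})
    (hg_cvx : ConvexOn ℝ Set.univ g)
    (hL : 0 < L)
    (hh_grad : ∀ z, HasGradientAt h (h' z) z)
    (hh_lip : LipschitzWith (Real.toNNReal L) h')
    (hΩ : ∃ z, g z ≠ 0)
    (hfh : ∀ z, 0 ≤ f z + ((h z : ℝ) : EReal))
    (hg_pos : ∀ z, f z ≠ ⊤ → g z ≠ 0 → 0 < g z)
    (x y : ℕ → EuclideanSpace ℝ (Fin n)) (c α : ℕ → ℝ) (αlo αhi : ℝ)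
    (hx0 : g (x 0) ≠ 0 ∧ f (x 0) ≠ ⊤)
    (hαlo : 0 < αlo) (hαhi : αhi < 1 / L) (hα : ∀ k, αlo ≤ α k ∧ α k ≤ αhi)
    (hy : ∀ k, y (k + 1) ∈ csub g (x k))
    (hc : ∀ k, c k = ((f (x k)).toReal + h (x k)) / g (x k))
    (hiter : ∀ k, x (k + 1) ∈ proxSet (fun z => ((α k : ℝ) : EReal) * f z)
      (x k - α k • h' (x k) + (α k * c k) • y (k + 1)))
    : (∀ k, Ffrac f g h (x (k + 1)) +
          (((1 / α k - L) / (2 * g (x (k + 1))) * ‖x (k + 1) - x k‖ ^ 2 : ℝ) : EReal) ≤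
        Ffrac f g h (x k)) ∧
      (∃ cl : ℝ, 0 ≤ cl ∧ Tendsto c atTop (𝓝 cl) ∧
        Tendsto (fun k => Ffrac f g h (x k)) atTop (𝓝 ((cl : ℝ) : EReal))) ∧
      Tendsto (fun k => (1 / α k - L) / g (x (k + 1)) * ‖x (k + 1) - x k‖ ^ 2)
        atTop (𝓝 0) := by
  lift L to ℝ≥0 using hL.le
  rw [Real.toNNReal_coe] at hh_lip
  have hα_pos (k : ℕ) : 0 < α k := hαlo.trans_le (hα k).1
  exact pgsa_objective_value_convergence_general hh_grad hh_lip hfh hg_pos hx0 hα_pos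
    (fun k => (lt_one_div (hα_pos k) hL).1 ((hα k).2.trans_lt hαhi)) hy hc
    (fun k => isMinOn_univ_iff.2 (hiter k))
end
end

section
/- Suppose the standing assumptions on f, g, h, Ω, F hold together with Assumptions 1 and 2, and let (x^k), (y^k), (c_k), (α_k) be generated by PGSA. Set c₀ := F(x⁰) and M := sup{g(x) : x ∈ ℝⁿ, F(x) ≤ c₀}. Then: (i) the sequence (x^k) is bounded; (ii) M is finite and positive, and with a := (1/ᾱ − L)/M > 0 one has F(x^{k+1}) + (a/2)·‖x^{k+1} − x^k‖₂² ≤ F(x^k) for every k ∈ ℕ. -/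
open Filter Topology
open scoped RealInnerProductSpace

noncomputable section

/-!
Comparing the proximal step `p` with the current point `x`, and inserting the subgradient
inequality for `g` (scaled by `c = F x ≥ 0`) and the quadratic upper bound for `h`, everything
linear in `p - x` cancels and leaves `f p + h p + (1/α - L)/2 * ‖p - x‖² ≤ c * g p`. If `g p`
vanished this would force `f p + h p = 0`, which Assumption 1 excludes, so one may divide by
`g p > 0`: whenever `a * g p ≤ 1/α - L`, also `F p + a/2 * ‖p - x‖² ≤ F x`. With `a = 0` this keeps
the iterates in the bounded sublevel set of `F (x 0)`, where `g ≤ M < ∞`, and then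
`a = (1/ᾱ - L)/M` is admissible at every step.
-/

open scoped NNReal

lemma ereal_ne_bot_of_nonneg_add_coe {s : EReal} {r : ℝ} (hs : 0 ≤ s + (r : EReal)) : s ≠ ⊥ := by
  rintro rfl
  simp at hs

lemma ereal_add_div_le_of_mul_add_le {s t : EReal} {α a b : ℝ} (hα : 0 < α)
    (hle : (α : EReal) * s + (a : EReal) ≤ α * t + (b : EReal)) :
    s + (((a - b) / α : ℝ) : EReal) ≤ t := by
  induction s with
  | bot => simp
  | top =>
    induction t with
    | top => exact le_top
    | bot => simp [EReal.coe_mul_top_of_pos hα, EReal.coe_mul_bot_of_pos hα] at hle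
    | coe t =>
      rw [EReal.coe_mul_top_of_pos hα, EReal.top_add_coe, top_le_iff] at hle
      exact absurd hle (by exact_mod_cast EReal.coe_ne_top _)
  | coe s =>
    induction t with
    | top => exact le_top
    | bot =>
      rw [EReal.coe_mul_bot_of_pos hα, EReal.bot_add, le_bot_iff] at hle
      exact absurd hle (by exact_mod_cast EReal.coe_ne_bot _)
    | coe t =>
      norm_cast at hle ⊢
      rw [← le_sub_iff_add_le', div_le_iff₀ hα]
      linarith

lemma image_le_quadratic_of_deriv_le_affine {φ φ' : ℝ → ℝ} {b C T : ℝ} (hT : 0 ≤ T)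
    (hφ : ∀ t ∈ Set.Icc 0 T, HasDerivAt φ (φ' t) t)
    (hφ' : ∀ t ∈ Set.Ico 0 T, φ' t ≤ b + C * t) :
    φ T ≤ φ 0 + b * T + C / 2 * T ^ 2 := by
  have hquad (t : ℝ) :
      HasDerivAt (fun t => φ 0 + b * t + C / 2 * t ^ 2) (b + C * t) t := by
    have hlin := ((hasDerivAt_id t).const_mul b).const_add (φ 0)
    exact (hlin.add ((hasDerivAt_pow 2 t).const_mul (C / 2))).congr_deriv (by push_cast; ring)
  exact image_le_of_deriv_right_le_deriv_boundary
    (fun t ht => (hφ t ht).continuousAt.continuousWithinAt)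
    (fun t ht => (hφ t (Set.Ico_subset_Icc_self ht)).hasDerivWithinAt)
    (by simp) (fun t _ => (hquad t).continuousAt.continuousWithinAt)
    (fun t _ => (hquad t).hasDerivWithinAt) hφ' (Set.right_mem_Icc.2 hT)

section InnerProductSpace

variable {E : Type*} [NormedAddCommGroup E] [InnerProductSpace ℝ E]

lemma inner_add_smul_le_of_lipschitzWith {v : E → E} {K : ℝ≥0} (hv : LipschitzWith K v)
    (x d : E) {t : ℝ} (ht : 0 ≤ t) :
    ⟪v (x + t • d), d⟫ ≤ ⟪v x, d⟫ + K * ‖d‖ ^ 2 * t := by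
  have hlip : ‖v (x + t • d) - v x‖ ≤ K * (t * ‖d‖) := by
    simpa [norm_smul, abs_of_nonneg ht] using hv.norm_sub_le (x + t • d) x
  calc ⟪v (x + t • d), d⟫ = ⟪v x, d⟫ + ⟪v (x + t • d) - v x, d⟫ := by rw [inner_sub_left]; ring
    _ ≤ ⟪v x, d⟫ + K * (t * ‖d‖) * ‖d‖ := by
        gcongr
        exact (real_inner_le_norm _ _).trans (by gcongr)
    _ = ⟪v x, d⟫ + K * ‖d‖ ^ 2 * t := by ring

lemma le_quadratic_of_lipschitzWith_gradient [CompleteSpace E] {h : E → ℝ} {h' : E → E} {K : ℝ≥0}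
    (hgrad : ∀ z, HasGradientAt h (h' z) z) (hlip : LipschitzWith K h') (x z : E) :
    h z ≤ h x + ⟪h' x, z - x⟫ + K / 2 * ‖z - x‖ ^ 2 := by
  have hderiv (t : ℝ) :
      HasDerivAt (fun t : ℝ => h (x + t • (z - x))) ⟪h' (x + t • (z - x)), z - x⟫ t := by
    have hline : HasDerivAt (fun t : ℝ => x + t • (z - x)) (z - x) t := by
      simpa using ((hasDerivAt_id t).smul_const (z - x)).const_add x
    exact ((hgrad _).hasFDerivAt.comp_hasDerivAt t hline).congr_deriv (by simp)
  have hquad := image_le_quadratic_of_deriv_le_affine zero_le_one (fun t _ => hderiv t)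
    fun t ht => inner_add_smul_le_of_lipschitzWith hlip x (z - x) ht.1
  simp only [one_smul, zero_smul, add_zero, add_sub_cancel] at hquad
  linarith

lemma norm_sub_add_sq_sub_norm_sq (p x d : E) :
    ‖p - (x + d)‖ ^ 2 - ‖x - (x + d)‖ ^ 2 = ‖p - x‖ ^ 2 - 2 * ⟪d, p - x⟫ := by
  rw [← sub_sub, norm_sub_sq_real, sub_add_cancel_left, norm_neg, real_inner_comm]
  ring

end InnerProductSpace

section PGSA

variable {n : ℕ} {f : EuclideanSpace ℝ (Fin n) → EReal} {g h : EuclideanSpace ℝ (Fin n) → ℝ}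
  {h' : EuclideanSpace ℝ (Fin n) → EuclideanSpace ℝ (Fin n)} {K : ℝ≥0} {α : ℝ}
  {p x v : EuclideanSpace ℝ (Fin n)}

lemma add_le_of_mem_proxSet_add_smul (hα : 0 < α)
    (hp : p ∈ proxSet (fun z => (α : EReal) * f z) (x + α • v)) :
    f p + ((1 / α / 2 * ‖p - x‖ ^ 2 - ⟪v, p - x⟫ : ℝ) : EReal) ≤ f x := by
  convert ereal_add_div_le_of_mul_add_le hα (hp x) using 3
  rw [← sub_div, norm_sub_add_sq_sub_norm_sq, real_inner_smul_left]
  field_simp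

lemma Ffrac_of_ne (hg : g x ≠ 0) (hf : f x ≠ ⊤) :
    Ffrac f g h x = ((((f x).toReal + h x) / g x : ℝ) : EReal) :=
  if_pos ⟨hg, hf⟩

lemma Ffrac_ne_top_iff : Ffrac f g h x ≠ ⊤ ↔ g x ≠ 0 ∧ f x ≠ ⊤ := by
  unfold Ffrac
  split_ifs with hx <;> simp [hx]

lemma pos_of_Ffrac_le_coe (hg_pos : f x ≠ ⊤ → g x ≠ 0 → 0 < g x) {c : ℝ}
    (hx : Ffrac f g h x ≤ (c : EReal)) : 0 < g x :=
  have hdom := Ffrac_ne_top_iff.1 (ne_top_of_le_ne_top (EReal.coe_ne_top c) hx)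
  hg_pos hdom.2 hdom.1

lemma Ffrac_add_coe_le_of_numerator_add_le {c q r : ℝ} (hfh : 0 ≤ f p + ((h p : ℝ) : EReal))
    (hg_pos : f p ≠ ⊤ → g p ≠ 0 → 0 < g p) (hA1 : g p = 0 → f p + ((h p : ℝ) : EReal) ≠ 0)
    (hq : 0 ≤ q) (hr : r * g p ≤ q)
    (hnum : f p + ((h p + q : ℝ) : EReal) ≤ ((c * g p : ℝ) : EReal)) :
    Ffrac f g h p + (r : EReal) ≤ (c : EReal) := by
  have hfp_bot := ereal_ne_bot_of_nonneg_add_coe hfh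
  have hfp_top : f p ≠ ⊤ := fun hfp => by
    rw [hfp, EReal.top_add_coe, top_le_iff] at hnum
    exact EReal.coe_ne_top _ hnum
  obtain ⟨fp, hfp⟩ : ∃ fp : ℝ, f p = fp := ⟨_, (EReal.coe_toReal hfp_top hfp_bot).symm⟩
  rw [hfp] at hnum hfh hA1
  norm_cast at hnum hfh hA1
  have hgp : g p ≠ 0 := fun hgp => by
    rw [hgp, mul_zero] at hnum
    exact hA1 hgp (by linarith)
  have hgp_pos : 0 < g p := hg_pos hfp_top hgp
  rw [Ffrac_of_ne hgp hfp_top, hfp, EReal.toReal_coe]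
  norm_cast
  rw [div_add' _ _ _ hgp, div_le_iff₀ hgp_pos]
  linarith

/-- One iteration of the proximity-gradient-subgradient algorithm (PGSA) with step size `α`, leading
from `x` to `p`. The current value `F x` of the objective enters as the real quotient
`(f x + h x) / g x`, which is meaningful only for `x` in the domain of `F`. -/
def IsPGSAStep_s9 (f : EuclideanSpace ℝ (Fin n) → EReal) (g h : EuclideanSpace ℝ (Fin n) → ℝ)
    (h' : EuclideanSpace ℝ (Fin n) → EuclideanSpace ℝ (Fin n)) (α : ℝ)
    (x p : EuclideanSpace ℝ (Fin n)) : Prop :=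
  ∃ y ∈ csub g x, p ∈ proxSet (fun z => (α : EReal) * f z)
    (x - α • h' x + (α * (((f x).toReal + h x) / g x)) • y)

namespace IsPGSAStep_s9

lemma numerator_add_le (hstep : IsPGSAStep_s9 f g h h' α x p) (hα : 0 < α)
    (hgrad : ∀ z, HasGradientAt h (h' z) z) (hlip : LipschitzWith K h')
    (hfx_bot : f x ≠ ⊥) (hfx_top : f x ≠ ⊤) (hgx : g x ≠ 0)
    (hratio : 0 ≤ ((f x).toReal + h x) / g x) :
    f p + ((h p + (1 / α - K) / 2 * ‖p - x‖ ^ 2 : ℝ) : EReal) ≤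
      ((((f x).toReal + h x) / g x * g p : ℝ) : EReal) := by
  obtain ⟨y, hy, hp⟩ := hstep
  lift f x to ℝ using ⟨hfx_top, hfx_bot⟩ with fx hfx
  rw [EReal.toReal_coe] at hp hratio ⊢
  set c := (fx + h x) / g x
  have hcgx : c * g x = fx + h x := div_mul_cancel₀ _ hgx
  have hshift : x - α • h' x + (α * c) • y = x + α • (c • y - h' x) := by module
  have hprox := add_le_of_mem_proxSet_add_smul hα (hshift ▸ hp)
  have hsubgrad : c * (g x + ⟪y, p - x⟫) ≤ c * g p := mul_le_mul_of_nonneg_left (hy p) hratio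
  have hdescent := le_quadratic_of_lipschitzWith_gradient hgrad hlip x p
  rw [← hfx, inner_sub_left, real_inner_smul_left] at hprox
  generalize f p = fp at hprox ⊢
  induction fp with
  | bot => simp
  | top =>
    rw [EReal.top_add_coe, top_le_iff] at hprox
    exact absurd hprox (EReal.coe_ne_top fx)
  | coe fp =>
    norm_cast at hprox ⊢
    linarith

lemma Ffrac_add_le (hstep : IsPGSAStep_s9 f g h h' α x p) (hα : 0 < α) (hαK : K ≤ 1 / α)
    (hgrad : ∀ z, HasGradientAt h (h' z) z) (hlip : LipschitzWith K h')
    (hfh : ∀ z, 0 ≤ f z + ((h z : ℝ) : EReal))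
    (hg_pos : ∀ z, f z ≠ ⊤ → g z ≠ 0 → 0 < g z)
    (hA1 : ∀ z, g z = 0 → f z + ((h z : ℝ) : EReal) ≠ 0)
    {a : ℝ} (ha : a * g p ≤ 1 / α - K) :
    Ffrac f g h p + ((a / 2 * ‖p - x‖ ^ 2 : ℝ) : EReal) ≤ Ffrac f g h x := by
  by_cases hx : Ffrac f g h x = ⊤
  · exact hx ▸ le_top
  obtain ⟨hgx, hfx⟩ := Ffrac_ne_top_iff.1 hx
  have hfx_bot := ereal_ne_bot_of_nonneg_add_coe (hfh x)
  have hratio : 0 ≤ ((f x).toReal + h x) / g x := by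
    refine div_nonneg ?_ (hg_pos x hfx hgx).le
    have hfhx := hfh x
    rw [← EReal.coe_toReal hfx hfx_bot] at hfhx
    exact_mod_cast hfhx
  have hnum := hstep.numerator_add_le hα hgrad hlip hfx_bot hfx hgx hratio
  have hquad : 0 ≤ (1 / α - K) / 2 * ‖p - x‖ ^ 2 :=
    mul_nonneg (div_nonneg (sub_nonneg.2 hαK) zero_le_two) (sq_nonneg _)
  rw [Ffrac_of_ne hgx hfx]
  refine Ffrac_add_coe_le_of_numerator_add_le (hfh p) (hg_pos p) (hA1 p) hquad ?_ hnum
  calc a / 2 * ‖p - x‖ ^ 2 * g p = a * g p / 2 * ‖p - x‖ ^ 2 := by ring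
    _ ≤ (1 / α - K) / 2 * ‖p - x‖ ^ 2 := by gcongr

end IsPGSAStep_s9

end PGSA

theorem pgsa_bounded_and_sufficient_decrease_general
    {n : ℕ} {f : EuclideanSpace ℝ (Fin n) → EReal} {g h : EuclideanSpace ℝ (Fin n) → ℝ}
    {h' : EuclideanSpace ℝ (Fin n) → EuclideanSpace ℝ (Fin n)} {K : ℝ≥0}
    (hg_cont : Continuous g)
    (hgrad : ∀ z, HasGradientAt h (h' z) z) (hlip : LipschitzWith K h')
    (hfh : ∀ z, 0 ≤ f z + ((h z : ℝ) : EReal))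
    (hg_pos : ∀ z, f z ≠ ⊤ → g z ≠ 0 → 0 < g z)
    (hA1 : ∀ z, g z = 0 → f z + ((h z : ℝ) : EReal) ≠ 0)
    {c₀ : ℝ} (hlevel : Bornology.IsBounded {z | Ffrac f g h z ≤ (c₀ : EReal)})
    {x : ℕ → EuclideanSpace ℝ (Fin n)} (hx0 : Ffrac f g h (x 0) ≤ (c₀ : EReal))
    {α : ℕ → ℝ} {αhi : ℝ} (hα : ∀ k, 0 < α k ∧ α k ≤ αhi) (hαhi : K < 1 / αhi)
    (hstep : ∀ k, IsPGSAStep_s9 f g h h' (α k) (x k) (x (k + 1)))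
    {M : ℝ} (hM : M = sSup (g '' {z | Ffrac f g h z ≤ (c₀ : EReal)}))
    {a : ℝ} (ha : a = (1 / αhi - K) / M) :
    Bornology.IsBounded (Set.range x) ∧
      (g '' {z | Ffrac f g h z ≤ (c₀ : EReal)}).Nonempty ∧
      BddAbove (g '' {z | Ffrac f g h z ≤ (c₀ : EReal)}) ∧
      0 < M ∧ 0 < a ∧
      ∀ k, Ffrac f g h (x (k + 1)) + ((a / 2 * ‖x (k + 1) - x k‖ ^ 2 : ℝ) : EReal) ≤
        Ffrac f g h (x k) := by
  have hcoeff (k) : 1 / αhi - K ≤ 1 / α k - K :=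
    sub_le_sub_right (one_div_le_one_div_of_le (hα k).1 (hα k).2) _
  have hdecrease {b : ℝ} (k) (hb : b * g (x (k + 1)) ≤ 1 / αhi - K) :=
    (hstep k).Ffrac_add_le (hα k).1 (sub_nonneg.1 ((sub_pos.2 hαhi).le.trans (hcoeff k)))
      hgrad hlip hfh hg_pos hA1 (hb.trans (hcoeff k))
  have hanti : Antitone fun k => Ffrac f g h (x k) := antitone_nat_of_succ_le fun k => by
    simpa using hdecrease k (b := 0) (by simpa using hαhi.le)
  have hmem (k) : Ffrac f g h (x k) ≤ (c₀ : EReal) := (hanti k.zero_le).trans hx0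
  have hbdd : BddAbove (g '' {z | Ffrac f g h z ≤ (c₀ : EReal)}) :=
    (hlevel.isCompact_closure.bddAbove_image hg_cont.continuousOn).mono
      (Set.image_mono subset_closure)
  have hgM (k) : g (x k) ≤ M := hM ▸ le_csSup hbdd ⟨x k, hmem k, rfl⟩
  have hM_pos : 0 < M := (pos_of_Ffrac_le_coe (hg_pos _) hx0).trans_le (hgM 0)
  have ha_pos : 0 < a := ha ▸ div_pos (sub_pos.2 hαhi) hM_pos
  refine ⟨hlevel.subset (Set.range_subset_iff.2 hmem), ⟨_, x 0, hx0, rfl⟩, hbdd, hM_pos, ha_pos,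
    fun k => hdecrease k ?_⟩
  calc a * g (x (k + 1)) ≤ a * M := mul_le_mul_of_nonneg_left (hgM _) ha_pos.le
    _ = 1 / αhi - K := by rw [ha, div_mul_cancel₀ _ hM_pos.ne']

/-- Lemma 4.7: under Assumptions 1 and 2, the PGSA sequence is bounded and satisfies a
sufficient-decrease property. -/
theorem pgsa_bounded_and_sufficient_decrease
    {n : ℕ} (hn : 1 ≤ n)
    (f : EuclideanSpace ℝ (Fin n) → EReal) (g h : EuclideanSpace ℝ (Fin n) → ℝ)
    (h' : EuclideanSpace ℝ (Fin n) → EuclideanSpace ℝ (Fin n)) (L : ℝ)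
    (hf_ne_bot : ∀ z, f z ≠ ⊥) (hf_proper : ∃ z, f z ≠ ⊤)
    (hf_lsc : LowerSemicontinuous f)
    (hf_bdd : ∃ m : ℝ, ∀ z, (m : EReal) ≤ f z)
    (hf_cont : ContinuousOn f {z | f z ≠ ⊤})
    (hg_cvx : ConvexOn ℝ Set.univ g)
    (hL : 0 < L)
    (hh_grad : ∀ z, HasGradientAt h (h' z) z)
    (hh_lip : LipschitzWith (Real.toNNReal L) h')
    (hΩ : ∃ z, g z ≠ 0)
    (hfh : ∀ z, 0 ≤ f z + ((h z : ℝ) : EReal))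
    (hg_pos : ∀ z, f z ≠ ⊤ → g z ≠ 0 → 0 < g z)
    (hA1 : ∀ z, g z = 0 → f z + ((h z : ℝ) : EReal) ≠ 0)
    (hA2 : ∀ t : ℝ, Bornology.IsBounded {z | Ffrac f g h z ≤ (t : EReal)})
    (x y : ℕ → EuclideanSpace ℝ (Fin n)) (c α : ℕ → ℝ) (αlo αhi : ℝ)
    (hx0 : g (x 0) ≠ 0 ∧ f (x 0) ≠ ⊤)
    (hαlo : 0 < αlo) (hαhi : αhi < 1 / L) (hα : ∀ k, αlo ≤ α k ∧ α k ≤ αhi)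
    (hy : ∀ k, y (k + 1) ∈ csub g (x k))
    (hc : ∀ k, c k = ((f (x k)).toReal + h (x k)) / g (x k))
    (hiter : ∀ k, x (k + 1) ∈ proxSet (fun z => ((α k : ℝ) : EReal) * f z)
      (x k - α k • h' (x k) + (α k * c k) • y (k + 1)))
    (c₀ : ℝ) (hc₀ : (c₀ : EReal) = Ffrac f g h (x 0))
    (M : ℝ) (hM : M = sSup (g '' {z | Ffrac f g h z ≤ (c₀ : EReal)}))
    (a : ℝ) (ha : a = (1 / αhi - L) / M) :
    Bornology.IsBounded (Set.range x) ∧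
      (g '' {z | Ffrac f g h z ≤ (c₀ : EReal)}).Nonempty ∧
      BddAbove (g '' {z | Ffrac f g h z ≤ (c₀ : EReal)}) ∧
      0 < M ∧ 0 < a ∧
      ∀ k, Ffrac f g h (x (k + 1)) + ((a / 2 * ‖x (k + 1) - x k‖ ^ 2 : ℝ) : EReal) ≤
        Ffrac f g h (x k) := by
  lift L to ℝ≥0 using hL.le
  rw [Real.toNNReal_coe] at hh_lip
  have hα_pos (k) : 0 < α k := hαlo.trans_le (hα k).1
  exact pgsa_bounded_and_sufficient_decrease_general hg_cvx.locallyLipschitz.continuous hh_grad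
    hh_lip hfh hg_pos hA1 (hA2 c₀) hc₀.ge (fun k => ⟨hα_pos k, (hα k).2⟩)
    ((lt_one_div hL ((hα_pos 0).trans_le (hα 0).2)).2 hαhi)
    (fun k => ⟨y (k + 1), hy k, hc k ▸ hiter k⟩) hM ha
end
end
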